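/- arXiv:1210.3397 — 6 statements merged into one kernel-verified Lean document; each statement's English description precedes it below -/
import Mathlib

section
/- Let ψ : [0,∞) → [0,∞) be a concave function with lim_{t→0+} ψ(t) = 0 and lim_{t→∞} ψ(t) = ∞, and let f be a nonnegative nonincreasing measurable function on (0,∞) with ‖f‖ := sup_{t>0} (1/ψ(t)) ∫_0^t f(s) ds < ∞. Then the function t ↦ a(e^t, f), where a(u,f) = (1/ψ(u)) ∫_0^u f(s) ds, is Lipschitz on (0,∞) with Lipschitz constant at most 2‖f‖; in particular it is uniformly continuous. -/
open MeasureTheory Filter Set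

/-- `avA ψ f t = (1/ψ(t)) ∫_0^t f(s) ds`. -/
noncomputable def avA (ψ f : ℝ → ℝ) (t : ℝ) : ℝ := (∫ s in (0:ℝ)..t, f s) / ψ t

/-- A function is bounded on `(0, ∞)`. -/
def BddPos (x : ℝ → ℝ) : Prop := ∃ C : ℝ, ∀ t > (0:ℝ), |x t| ≤ C

/-- A generalized limit (at infinity) on the bounded measurable functions on `(0, ∞)`:
a linear functional sandwiched between `liminf` and `limsup` at infinity. -/
def IsGenLim (ω : (ℝ → ℝ) → ℝ) : Prop :=
  (∀ x y : ℝ → ℝ, Measurable x → BddPos x → Measurable y → BddPos y →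
    ω (x + y) = ω x + ω y) ∧
  (∀ (c : ℝ) (x : ℝ → ℝ), Measurable x → BddPos x → ω (c • x) = c * ω x) ∧
  (∀ x : ℝ → ℝ, Measurable x → BddPos x →
    Filter.liminf x Filter.atTop ≤ ω x ∧ ω x ≤ Filter.limsup x Filter.atTop)

/-- Dilation invariance: `ω (σ_s x) = ω x` where `(σ_s x)(t) = x(t/s)`. -/
def DilInv (ω : (ℝ → ℝ) → ℝ) : Prop :=
  ∀ s > (0:ℝ), ∀ x : ℝ → ℝ, Measurable x → BddPos x →
    ω (fun t => x (t / s)) = ω x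

/-- The class `Ω`: nonnegative concave functions on `[0, ∞)` with `ψ(0+) = 0`
and `ψ(∞) = ∞`. -/
def InOmegaClass (ψ : ℝ → ℝ) : Prop :=
  ConcaveOn ℝ (Set.Ici 0) ψ ∧ (∀ t, 0 ≤ t → 0 ≤ ψ t) ∧
  Filter.Tendsto ψ (nhdsWithin 0 (Set.Ioi 0)) (nhds 0) ∧
  Filter.Tendsto ψ Filter.atTop Filter.atTop

/-!
Both `ψ` and `F t = ∫₀ᵗ f` are nondecreasing, while `ψ t / t` and `F t / t` are nonincreasing. Hence
for `0 < u ≤ v` each of them grows from `u` to `v` by a factor in `[1, v / u]`, and their quotient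
changes by a factor in `[u / v, v / u]`. If the quotient is at most `C`, it therefore changes by
at most `C (1 - u / v) ≤ C log (v / u)`. This avoids derivatives and gives the constant `C`
instead of `2 C`.
-/

section Concave

variable {ψ : ℝ → ℝ}

lemma monotoneOn_Ici_of_concaveOn_of_bddBelow {a : ℝ} (hconc : ConcaveOn ℝ (Ici a) ψ)
    (hbdd : BddBelow (ψ '' Ici a)) : MonotoneOn ψ (Ici a) := by
  obtain ⟨m, hm⟩ := hbdd
  intro u hu v hv huv
  by_contra! hlt
  have huv' : u < v := huv.lt_of_ne fun h ↦ hlt.ne (congrArg ψ h.symm)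
  have hdrop : 0 < ψ u - ψ v := sub_pos.2 hlt
  have hmv : m ≤ ψ v := hm (mem_image_of_mem ψ hv)
  -- Past `v` the graph lies below its secant line, which takes the value `m - 1` at `v + d`.
  set d := (v - u) * ((ψ v - m + 1) / (ψ u - ψ v))
  have hd : 0 < d := mul_pos (sub_pos.2 huv') (div_pos (by linarith) hdrop)
  have hw : v + d ∈ Ici a := le_add_of_le_of_nonneg hv hd.le
  have hslope : (ψ (v + d) - ψ v) / (v + d - v) ≤ (ψ v - ψ u) / (v - u) :=
    hconc.slope_anti_adjacent hu hw huv' (lt_add_of_pos_right v hd)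
  rw [add_sub_cancel_left, div_le_iff₀ hd] at hslope
  have hsecant : (ψ v - ψ u) / (v - u) * d = -(ψ v - m + 1) := by
    have : v - u ≠ 0 := (sub_pos.2 huv').ne'
    have := hdrop.ne'
    simp only [d]
    field_simp
    ring
  have hmw : m ≤ ψ (v + d) := hm (mem_image_of_mem ψ hw)
  linarith

lemma antitoneOn_div_of_concaveOn (hconc : ConcaveOn ℝ (Ici 0) ψ) (hzero : 0 ≤ ψ 0) :
    AntitoneOn (fun t ↦ ψ t / t) (Ioi 0) := by
  intro u (hu : 0 < u) v (hv : 0 < v) huv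
  have hslope : slope ψ 0 v ≤ slope ψ 0 u :=
    hconc.antitoneOn_slope_gt self_mem_Ici ⟨hu.le, hu⟩ ⟨hv.le, hv⟩ huv
  have hdiv : ψ 0 / v ≤ ψ 0 / u := div_le_div_of_nonneg_left hzero hu huv
  simp only [slope_def_field, sub_zero, sub_div] at hslope
  linarith

end Concave

section Integral

variable {f : ℝ → ℝ}

lemma monotoneOn_integral (hnonneg : ∀ t > 0, 0 ≤ f t)
    (hint : ∀ t > 0, IntervalIntegrable f volume 0 t) :
    MonotoneOn (fun t ↦ ∫ s in (0 : ℝ)..t, f s) (Ioi 0) := by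
  intro u (hu : 0 < u) v (hv : 0 < v) huv
  refine intervalIntegral.integral_mono_interval le_rfl hu.le huv ?_ (hint v hv)
  filter_upwards [ae_restrict_mem measurableSet_Ioc] with s hs using hnonneg s hs.1

lemma antitoneOn_integral_div (hanti : AntitoneOn f (Ioi 0))
    (hint : ∀ t > 0, IntervalIntegrable f volume 0 t) :
    AntitoneOn (fun t ↦ (∫ s in (0 : ℝ)..t, f s) / t) (Ioi 0) := by
  have hrescale (t : ℝ) (ht : 0 < t) :
      (∫ s in (0 : ℝ)..t, f s) / t = ∫ s in (0 : ℝ)..1, f (t * s) := by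
    simp [intervalIntegral.integral_comp_mul_left f ht.ne', div_eq_inv_mul]
  have hint_comp (t : ℝ) (ht : 0 < t) : IntervalIntegrable (fun s ↦ f (t * s)) volume 0 1 := by
    simpa [ht.ne'] using (hint t ht).comp_mul_left (c := t)
  intro u (hu : 0 < u) v (hv : 0 < v) huv
  simp only [hrescale u hu, hrescale v hv]
  exact intervalIntegral.integral_mono_on_of_le_Ioo zero_le_one (hint_comp v hv) (hint_comp u hu)
    fun s hs ↦ hanti (mul_pos hu hs.1) (mul_pos hv hs.1) (mul_le_mul_of_nonneg_right huv hs.1.le)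

end Integral

/-- Quasiconcave functions on `(0, ∞)` in the sense of interpolation theory: nonnegative,
nondecreasing, with `g t / t` nonincreasing. This is the property shared by `ψ` and `t ↦ ∫₀ᵗ f` from
which the Lipschitz bound follows. It differs from Mathlib's `QuasiconcaveOn`, and the zero
function is allowed. -/
structure IsQuasiconcaveWeight (g : ℝ → ℝ) : Prop where
  nonneg : ∀ t > 0, 0 ≤ g t
  monotoneOn : MonotoneOn g (Ioi 0)
  antitoneOn_div : AntitoneOn (fun t ↦ g t / t) (Ioi 0)

namespace IsQuasiconcaveWeight

section Quotient

variable {g h : ℝ → ℝ} {u v C : ℝ}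

lemma div_mul_le (hg : IsQuasiconcaveWeight g) (hu : 0 < u) (huv : u ≤ v) :
    u / v * g v ≤ g u := by
  have hle : g v / v ≤ g u / u := hg.antitoneOn_div hu (hu.trans_le huv) huv
  calc u / v * g v = g v / v * u := by ring
    _ ≤ g u := (le_div_iff₀ hu).1 hle

lemma div_mul_div_le_div_right (hg : IsQuasiconcaveWeight g) (hh : IsQuasiconcaveWeight h)
    (hpos : ∀ t > 0, 0 < h t) (hu : 0 < u) (huv : u ≤ v) :
    u / v * (g u / h u) ≤ g v / h v := by
  have hv : 0 < v := hu.trans_le huv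
  rw [← mul_div_assoc, div_le_div_iff₀ (hpos u hu) (hpos v hv)]
  calc u / v * g u * h v = g u * (u / v * h v) := by ring
    _ ≤ g v * h u := mul_le_mul (hg.monotoneOn hu hv huv) (hh.div_mul_le hu huv)
        (mul_nonneg (div_pos hu hv).le (hpos v hv).le) (hg.nonneg v hv)

lemma div_mul_div_le_div_left (hg : IsQuasiconcaveWeight g) (hh : IsQuasiconcaveWeight h)
    (hpos : ∀ t > 0, 0 < h t) (hu : 0 < u) (huv : u ≤ v) :
    u / v * (g v / h v) ≤ g u / h u := by
  rw [← mul_div_assoc]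
  exact div_le_div₀ (hg.nonneg u hu) (hg.div_mul_le hu huv) (hpos u hu)
    (hh.monotoneOn hu (hu.trans_le huv) huv)

lemma abs_div_sub_div_le (hg : IsQuasiconcaveWeight g) (hh : IsQuasiconcaveWeight h)
    (hpos : ∀ t > 0, 0 < h t) (hC : ∀ t > 0, g t / h t ≤ C) (hu : 0 < u) (huv : u ≤ v) :
    |g u / h u - g v / h v| ≤ C * (1 - u / v) := by
  have hv : 0 < v := hu.trans_le huv
  have hfrac : 0 ≤ 1 - u / v := sub_nonneg.2 (div_le_one_of_le₀ huv hv.le)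
  have hCu := mul_le_mul_of_nonneg_right (hC u hu) hfrac
  have hCv := mul_le_mul_of_nonneg_right (hC v hv) hfrac
  have hright := hg.div_mul_div_le_div_right hh hpos hu huv
  have hleft := hg.div_mul_div_le_div_left hh hpos hu huv
  rw [abs_le]
  constructor <;> linarith

lemma abs_div_exp_sub_div_exp_le (hg : IsQuasiconcaveWeight g) (hh : IsQuasiconcaveWeight h)
    (hpos : ∀ t > 0, 0 < h t) (hC : ∀ t > 0, g t / h t ≤ C) (s t : ℝ) :
    |g (Real.exp s) / h (Real.exp s) - g (Real.exp t) / h (Real.exp t)| ≤ C * |s - t| := by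
  wlog hst : s ≤ t generalizing s t
  · rw [abs_sub_comm, abs_sub_comm s]
    exact this t s (le_of_not_ge hst)
  have hC₀ : 0 ≤ C := (div_nonneg (hg.nonneg 1 one_pos) (hpos 1 one_pos).le).trans (hC 1 one_pos)
  calc |g (Real.exp s) / h (Real.exp s) - g (Real.exp t) / h (Real.exp t)|
      ≤ C * (1 - Real.exp s / Real.exp t) :=
        hg.abs_div_sub_div_le hh hpos hC (Real.exp_pos s) (Real.exp_le_exp.2 hst)
    _ = C * (1 - Real.exp (s - t)) := by rw [Real.exp_sub]
    _ ≤ C * |s - t| := by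
        rw [abs_of_nonpos (sub_nonpos.2 hst)]
        gcongr
        linarith [Real.add_one_le_exp (s - t)]

end Quotient

lemma of_concaveOn {ψ : ℝ → ℝ} (hconc : ConcaveOn ℝ (Ici 0) ψ)
    (hnonneg : ∀ t, 0 ≤ t → 0 ≤ ψ t) : IsQuasiconcaveWeight ψ where
  nonneg t ht := hnonneg t ht.le
  monotoneOn := (monotoneOn_Ici_of_concaveOn_of_bddBelow hconc
    ⟨0, forall_mem_image.2 hnonneg⟩).mono Ioi_subset_Ici_self
  antitoneOn_div := antitoneOn_div_of_concaveOn hconc (hnonneg 0 le_rfl)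

lemma of_integral {f : ℝ → ℝ} (hnonneg : ∀ t > 0, 0 ≤ f t) (hanti : AntitoneOn f (Ioi 0))
    (hint : ∀ t > 0, IntervalIntegrable f volume 0 t) :
    IsQuasiconcaveWeight fun t ↦ ∫ s in (0 : ℝ)..t, f s where
  nonneg t ht := by
    rw [intervalIntegral.integral_of_le ht.le]
    exact setIntegral_nonneg measurableSet_Ioc fun s hs ↦ hnonneg s hs.1
  monotoneOn := monotoneOn_integral hnonneg hint
  antitoneOn_div := antitoneOn_integral_div hanti hint

end IsQuasiconcaveWeight

lemma InOmegaClass.isQuasiconcaveWeight {ψ : ℝ → ℝ} (hψ : InOmegaClass ψ) :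
    IsQuasiconcaveWeight ψ :=
  .of_concaveOn hψ.1 hψ.2.1

lemma InOmegaClass.pos {ψ : ℝ → ℝ} (hψ : InOmegaClass ψ) : ∀ t > 0, 0 < ψ t := by
  intro t ht
  obtain ⟨w, hψw, htw⟩ :=
    ((hψ.2.2.2.eventually_gt_atTop 0).and (eventually_ge_atTop t)).exists
  exact (mul_pos (div_pos ht (ht.trans_le htw)) hψw).trans_le
    (hψ.isQuasiconcaveWeight.div_mul_le ht htw)

theorem avA_exp_lipschitz_general {ψ f : ℝ → ℝ} {C : ℝ} (hψ : IsQuasiconcaveWeight ψ)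
    (hψpos : ∀ t > 0, 0 < ψ t) (hfpos : ∀ t > 0, 0 ≤ f t) (hfmono : AntitoneOn f (Ioi 0))
    (hfint : ∀ t > 0, IntegrableOn f (Ioc 0 t)) (hC : ∀ t > 0, avA ψ f t ≤ C) :
    (∀ t₁ t₂, |avA ψ f (Real.exp t₁) - avA ψ f (Real.exp t₂)| ≤ C * |t₁ - t₂|) ∧
      UniformContinuous fun t ↦ avA ψ f (Real.exp t) := by
  have hint (t : ℝ) (ht : t > 0) : IntervalIntegrable f volume 0 t :=
    (intervalIntegrable_iff_integrableOn_Ioc_of_le ht.le).2 (hfint t ht)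
  have hbound := (IsQuasiconcaveWeight.of_integral hfpos hfmono hint).abs_div_exp_sub_div_exp_le
    hψ hψpos hC
  exact ⟨hbound, (LipschitzWith.of_dist_le' hbound).uniformContinuous⟩

/-- For `ψ ∈ Ω` and nonnegative nonincreasing `f` with `a(t,f) = (1/ψ(t)) ∫_0^t f ≤ C`
for all `t > 0`, the map `t ↦ a(eᵗ, f)` is Lipschitz on `(0,∞)` with constant at
most `2C`; in particular it is uniformly continuous on `(0,∞)`. -/
theorem avA_exp_lipschitz (ψ : ℝ → ℝ) (hψ : InOmegaClass ψ)
    (f : ℝ → ℝ) (hfmeas : Measurable f)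
    (hfpos : ∀ t > (0:ℝ), 0 ≤ f t) (hfmono : AntitoneOn f (Set.Ioi 0))
    (hfint : ∀ t > (0:ℝ), IntegrableOn f (Set.Ioc 0 t))
    (C : ℝ) (hC : ∀ t > (0:ℝ), avA ψ f t ≤ C) :
    (∀ t₁ > (0:ℝ), ∀ t₂ > (0:ℝ),
        |avA ψ f (Real.exp t₁) - avA ψ f (Real.exp t₂)| ≤ 2 * C * |t₁ - t₂|) ∧
    UniformContinuousOn (fun t => avA ψ f (Real.exp t)) (Set.Ioi 0) := by
  obtain ⟨hlip, hunif⟩ :=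
    avA_exp_lipschitz_general hψ.isQuasiconcaveWeight hψ.pos hfpos hfmono hfint hC
  refine ⟨fun t₁ _ t₂ _ ↦ ?_, hunif.uniformContinuousOn⟩
  linarith [hlip t₁ t₂, abs_nonneg (avA ψ f (Real.exp t₁) - avA ψ f (Real.exp t₂))]
end

section
/- Define f0 : (0,∞) → ℝ by f0 = sup_{k≥0} 2^{k−2^k} χ_{[0,2^{2^k})}, i.e. f0(t) = sup { 2^{k−2^k} : k ≥ 0, t < 2^{2^k} } (and f0(t) = 0 if no such k exists). Then f0 is nonnegative, nonincreasing, and sup_{t>0} (1/log(1+t)) ∫_0^t f0(s) ds < ∞; that is, f0 belongs to the Marcinkiewicz function space M_{1,∞}. -/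
open MeasureTheory Filter Set

/-- `f0 = sup_{k ≥ 0} 2^(k - 2^k) χ_[0, 2^(2^k))`, i.e.
`f0(t) = sup {2^(k - 2^k) : k ≥ 0, t < 2^(2^k)}` (and `0` if no such `k` exists). -/
noncomputable def f0 : ℝ → ℝ := fun t =>
  ⨆ k : ℕ, if t < (2:ℝ) ^ (2 ^ k) then (2:ℝ) ^ ((k : ℤ) - 2 ^ k) else 0

/-!
Each step of `f0`, of height `2 ^ (k - 2 ^ k)` and length at most `2 ^ 2 ^ k`, has area at most
`2 ^ k`. Hence the integral of `f0` up to `2 ^ 2 ^ n` is at most `1 + 2 + ⋯ + 2 ^ n < 2 * 2 ^ n`,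
which is comparable to `log (2 ^ 2 ^ n)`. Consecutive points `2 ^ 2 ^ n` have logarithms in
ratio `2`, so for a nonnegative nonincreasing function it suffices to test there, except near `0`,
where boundedness of the function is enough because `t = O(log (1 + t))`.
-/

theorem exists_pow_two_pow_le_lt {R : Type*} [Semiring R] [LinearOrder R] [IsStrictOrderedRing R]
    [Archimedean R] [ExistsAddOfLE R] {x y : R} (hy : 1 < y) (hyx : y ≤ x) :
    ∃ n : ℕ, y ^ 2 ^ n ≤ x ∧ x < y ^ 2 ^ (n + 1) := by
  obtain ⟨m, hm, hm'⟩ := exists_nat_pow_near (hy.le.trans hyx) hy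
  have hm0 : m ≠ 0 := by
    rintro rfl
    rw [zero_add, pow_one] at hm'
    exact hyx.not_gt hm'
  refine ⟨Nat.log 2 m, ?_, ?_⟩
  · exact (pow_le_pow_right₀ hy.le (Nat.pow_log_le_self 2 hm0)).trans hm
  · exact hm'.trans_le (pow_le_pow_right₀ hy.le (Nat.lt_pow_succ_log_self one_lt_two m))

section IntegralDivLog

variable {f : ℝ → ℝ}

theorem integral_le_sub_mul_of_antitoneOn {a b : ℝ} (hab : a ≤ b) (hf : AntitoneOn f (Icc a b)) :
    ∫ s in a..b, f s ≤ (b - a) * f a := by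
  have hint : IntervalIntegrable f volume a b :=
    AntitoneOn.intervalIntegrable (by rwa [uIcc_of_le hab])
  calc ∫ s in a..b, f s ≤ ∫ _ in a..b, f a :=
        intervalIntegral.integral_mono_on hab hint intervalIntegrable_const
          fun s hs ↦ hf (left_mem_Icc.2 hab) hs hs.1
    _ = (b - a) * f a := by rw [intervalIntegral.integral_const, smul_eq_mul]

theorem le_two_mul_log_one_add {t : ℝ} (ht0 : 0 ≤ t) (ht2 : t ≤ 2) : t ≤ 2 * Real.log (1 + t) := by
  have hlog : 2 * t / (t + 2) ≤ Real.log (1 + t) := Real.le_log_one_add_of_nonneg ht0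
  have hhalf : t / 2 ≤ 2 * t / (t + 2) := by
    rw [div_le_div_iff₀ two_pos (by linarith)]
    nlinarith
  linarith

theorem two_pow_le_two_mul_log_one_add {n : ℕ} {t : ℝ} (ht : 2 ^ 2 ^ n ≤ t) :
    2 ^ n ≤ 2 * Real.log (1 + t) := by
  have hlog : Real.log (2 ^ 2 ^ n) ≤ Real.log (1 + t) :=
    Real.log_le_log (by positivity) (by linarith)
  rw [Real.log_pow, Nat.cast_pow, Nat.cast_ofNat] at hlog
  have hpow : (0 : ℝ) < 2 ^ n := by positivity
  nlinarith [Real.log_two_gt_d9]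

theorem integral_le_mul_log_of_le_two (hanti : AntitoneOn f (Ici 0)) (hf0 : 0 ≤ f 0)
    {t : ℝ} (ht0 : 0 ≤ t) (ht2 : t ≤ 2) :
    ∫ s in (0 : ℝ)..t, f s ≤ 2 * f 0 * Real.log (1 + t) :=
  calc ∫ s in (0 : ℝ)..t, f s ≤ (t - 0) * f 0 :=
        integral_le_sub_mul_of_antitoneOn ht0 (hanti.mono Icc_subset_Ici_self)
    _ = t * f 0 := by rw [sub_zero]
    _ ≤ 2 * Real.log (1 + t) * f 0 :=
        mul_le_mul_of_nonneg_right (le_two_mul_log_one_add ht0 ht2) hf0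
    _ = 2 * f 0 * Real.log (1 + t) := by ring

theorem integral_le_mul_log_of_two_le (hint : ∀ b, 0 ≤ b → IntervalIntegrable f volume 0 b)
    (hnonneg : ∀ s, 0 ≤ s → 0 ≤ f s) {K : ℝ}
    (hK : ∀ n : ℕ, ∫ s in (0 : ℝ)..2 ^ 2 ^ n, f s ≤ K * 2 ^ n) {t : ℝ} (ht : 2 ≤ t) :
    ∫ s in (0 : ℝ)..t, f s ≤ 4 * K * Real.log (1 + t) := by
  have ht0 : 0 ≤ t := zero_le_two.trans ht
  obtain ⟨n, hnt, htn⟩ := exists_pow_two_pow_le_lt one_lt_two ht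
  have hK0 : 0 ≤ K := by
    have hpos : 0 ≤ ∫ s in (0 : ℝ)..2 ^ 2 ^ 0, f s :=
      intervalIntegral.integral_nonneg (by positivity) fun s hs ↦ hnonneg s hs.1
    simpa only [pow_zero, mul_one] using hpos.trans (hK 0)
  calc ∫ s in (0 : ℝ)..t, f s ≤ ∫ s in (0 : ℝ)..2 ^ 2 ^ (n + 1), f s :=
        intervalIntegral.integral_mono_interval le_rfl ht0 htn.le
          (ae_restrict_of_forall_mem measurableSet_Ioc fun s hs ↦ hnonneg s hs.1.le)
          (hint _ (by positivity))
    _ ≤ K * 2 ^ (n + 1) := hK (n + 1)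
    _ = 2 * K * 2 ^ n := by ring
    _ ≤ 2 * K * (2 * Real.log (1 + t)) :=
        mul_le_mul_of_nonneg_left (two_pow_le_two_mul_log_one_add hnt) (by positivity)
    _ = 4 * K * Real.log (1 + t) := by ring

theorem integral_div_log_le_max (hanti : AntitoneOn f (Ici 0)) (hnonneg : ∀ s, 0 ≤ s → 0 ≤ f s)
    {K : ℝ} (hK : ∀ n : ℕ, ∫ s in (0 : ℝ)..2 ^ 2 ^ n, f s ≤ K * 2 ^ n) {t : ℝ} (ht : 0 < t) :
    (∫ s in (0 : ℝ)..t, f s) / Real.log (1 + t) ≤ max (2 * f 0) (4 * K) := by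
  have hlog : 0 < Real.log (1 + t) := Real.log_pos (by linarith)
  rcases le_total t 2 with ht2 | ht2
  · refine le_max_of_le_left ((div_le_iff₀ hlog).2 ?_)
    exact integral_le_mul_log_of_le_two hanti (hnonneg 0 le_rfl) ht.le ht2
  · have hint (b : ℝ) (hb : 0 ≤ b) : IntervalIntegrable f volume 0 b :=
      AntitoneOn.intervalIntegrable
        (hanti.mono ((uIcc_of_le hb).trans_subset Icc_subset_Ici_self))
    refine le_max_of_le_right ((div_le_iff₀ hlog).2 ?_)
    exact integral_le_mul_log_of_two_le hint hnonneg hK ht2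

end IntegralDivLog

/-- The supremum of the step functions `a k • χ_(-∞, b k)`, which restricts on `[0, ∞)` to the
supremum of the `a k • χ_[0, b k)`. It abstracts the shape of `f0` from its particular heights `a`
and endpoints `b`. If the terms are unbounded at `t`, the supremum is the junk value `0`. -/
noncomputable def staircase (b a : ℕ → ℝ) (t : ℝ) : ℝ :=
  ⨆ k, if t < b k then a k else 0

section Staircase

variable {a b : ℕ → ℝ}

theorem staircase_nonneg (ha : ∀ k, 0 ≤ a k) (t : ℝ) : 0 ≤ staircase b a t :=
  Real.iSup_nonneg fun k ↦ ite_nonneg (ha k) le_rfl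

theorem antitone_staircase (ha : ∀ k, 0 ≤ a k) (hbdd : BddAbove (range a)) :
    Antitone (staircase b a) := by
  intro s t hst
  obtain ⟨M, hM⟩ := hbdd
  have hbdd' : BddAbove (range fun k ↦ if s < b k then a k else 0) := by
    refine ⟨M, forall_mem_range.2 fun k ↦ ?_⟩
    have hak : a k ≤ M := hM (mem_range_self k)
    split_ifs
    exacts [hak, (ha k).trans hak]
  refine ciSup_mono hbdd' fun k ↦ ?_
  by_cases ht : t < b k
  · rw [if_pos ht, if_pos (hst.trans_lt ht)]
  · rw [if_neg ht]
    exact ite_nonneg (ha k) le_rfl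

theorem staircase_le (ha : ∀ k, 0 ≤ a k) (hanti : Antitone a) {n : ℕ} {t : ℝ}
    (ht : ∀ k < n, b k ≤ t) : staircase b a t ≤ a n := by
  refine ciSup_le fun k ↦ ?_
  split_ifs with htk
  · exact hanti (not_lt.1 fun hkn ↦ (ht k hkn).not_gt htk)
  · exact ha n

theorem integral_staircase_le_sum (ha : ∀ k, 0 ≤ a k) (hanti : Antitone a) (hb0 : 0 ≤ b 0)
    (hmono : Monotone b) (n : ℕ) :
    ∫ s in (0 : ℝ)..b n, staircase b a s ≤ ∑ k ∈ Finset.range (n + 1), b k * a k := by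
  have hb (k : ℕ) : 0 ≤ b k := hb0.trans (hmono k.zero_le)
  have hstair : Antitone (staircase b a) :=
    antitone_staircase ha ⟨a 0, forall_mem_range.2 fun k ↦ hanti k.zero_le⟩
  have step {x : ℝ} {k : ℕ} (hx : 0 ≤ x) (hxb : x ≤ b k) (hk : ∀ j < k, b j ≤ x) :
      ∫ s in x..b k, staircase b a s ≤ b k * a k :=
    calc ∫ s in x..b k, staircase b a s ≤ (b k - x) * staircase b a x :=
          integral_le_sub_mul_of_antitoneOn hxb (hstair.antitoneOn _)
      _ ≤ b k * a k := mul_le_mul (sub_le_self _ hx) (staircase_le ha hanti hk)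
          (staircase_nonneg ha x) (hb k)
  induction n with
  | zero => simpa using step le_rfl hb0 (by simp)
  | succ n ih =>
    rw [Finset.sum_range_succ, ← intervalIntegral.integral_add_adjacent_intervals
      (hstair.intervalIntegrable (b := b n)) hstair.intervalIntegrable]
    exact add_le_add ih <| step (hb n) (hmono n.le_succ) fun j hj ↦ hmono (Nat.lt_succ_iff.1 hj)

end Staircase

theorem f0_eq_staircase :
    f0 = staircase (fun k ↦ 2 ^ 2 ^ k) (fun k ↦ 2 ^ ((k : ℤ) - 2 ^ k)) :=
  rfl

theorem antitone_two_zpow_sub_two_pow : Antitone fun k : ℕ ↦ (2 : ℝ) ^ ((k : ℤ) - 2 ^ k) := by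
  refine antitone_nat_of_succ_le fun k ↦ zpow_le_zpow_right₀ one_le_two ?_
  have hpow : (1 : ℤ) ≤ 2 ^ k := one_le_pow₀ one_le_two
  rw [pow_succ, Nat.cast_succ]
  linarith

theorem two_pow_mul_two_zpow_sub (k : ℕ) :
    (2 : ℝ) ^ 2 ^ k * 2 ^ ((k : ℤ) - 2 ^ k) = 2 ^ k := by
  rw [← zpow_natCast, ← zpow_add₀ two_ne_zero, ← zpow_natCast]
  push_cast
  rw [add_sub_cancel]

theorem f0_nonneg (t : ℝ) : 0 ≤ f0 t := by
  rw [f0_eq_staircase]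
  exact staircase_nonneg (fun k ↦ by positivity) t

theorem antitone_f0 : Antitone f0 := by
  rw [f0_eq_staircase]
  exact antitone_staircase (fun k ↦ by positivity)
    ⟨_, forall_mem_range.2 fun k ↦ antitone_two_zpow_sub_two_pow k.zero_le⟩

theorem integral_f0_le_two_mul_two_pow (n : ℕ) : ∫ s in (0 : ℝ)..2 ^ 2 ^ n, f0 s ≤ 2 * 2 ^ n := by
  rw [f0_eq_staircase]
  calc ∫ s in (0 : ℝ)..2 ^ 2 ^ n, staircase _ _ s
      ≤ ∑ k ∈ Finset.range (n + 1), (2 : ℝ) ^ 2 ^ k * 2 ^ ((k : ℤ) - 2 ^ k) :=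
        integral_staircase_le_sum (fun k ↦ by positivity) antitone_two_zpow_sub_two_pow
          (by positivity)
          (fun i j hij ↦ pow_le_pow_right₀ one_le_two (Nat.pow_le_pow_right two_pos hij)) n
    _ = ∑ k ∈ Finset.range (n + 1), (2 : ℝ) ^ k :=
        Finset.sum_congr rfl fun k _ ↦ two_pow_mul_two_zpow_sub k
    _ = 2 * 2 ^ n - 1 := by rw [geom_sum_eq (by norm_num)]; ring
    _ ≤ 2 * 2 ^ n := sub_le_self _ zero_le_one

/-- `f0` is nonnegative, nonincreasing on `(0,∞)`, and belongs to the Marcinkiewicz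
function space `M_{1,∞}`: `sup_{t>0} (1/log(1+t)) ∫_0^t f0(s) ds < ∞`. -/
theorem f0_mem_M1infty :
    (∀ t : ℝ, 0 ≤ f0 t) ∧ AntitoneOn f0 (Set.Ioi 0) ∧
    ∃ C : ℝ, ∀ t > (0:ℝ), (∫ s in (0:ℝ)..t, f0 s) / Real.log (1 + t) ≤ C := by
  refine ⟨f0_nonneg, antitone_f0.antitoneOn _, max (2 * f0 0) (4 * 2), fun t ht ↦ ?_⟩
  exact integral_div_log_le_max (antitone_f0.antitoneOn _) (fun s _ ↦ f0_nonneg s)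
    integral_f0_le_two_mul_two_pow ht
end

section
/- Define x : (0,∞) → ℝ by x(t) = 2^n/log t for t ∈ [2^{2^n}, 2^{2^{n+1}}) with n ≥ 0 an integer, and x(t) = 0 for t ∈ (0,2). Then limsup_{t→∞} (Mx)(t) = 2/(e·log 2), where (Mx)(t) = (1/log t) ∫_1^t x(s) ds/s for t > 1. -/
open MeasureTheory Filter Set

/-- The logarithmic Cesàro mean `(Mg)(t) = (1/log t) ∫_1^t g(s) ds/s`. -/
noncomputable def Mop (g : ℝ → ℝ) (t : ℝ) : ℝ := (∫ s in (1:ℝ)..t, g s / s) / Real.log t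

/-- `x(t) = 2^n / log t` for `t ∈ [2^(2^n), 2^(2^(n+1)))` (so `n = ⌊log₂ log₂ t⌋`
for `t ≥ 2`), and `x(t) = 0` for `t < 2`. -/
noncomputable def x0 : ℝ → ℝ := fun t =>
  if 2 ≤ t then (2:ℝ) ^ (Nat.floor (Real.logb 2 (Real.logb 2 t))) / Real.log t else 0

/-!
On the block `[2 ^ 2 ^ n, 2 ^ 2 ^ (n + 1)]` the integrand `x(s) / s` has antiderivative
`2 ^ n * log (log s)`, so the blocks telescope to
`∫ s in 1..t, x(s) / s = 2 ^ n * log (2 * log₂ t / 2 ^ n) - log 2`.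
Since `a * log (u / a) ≤ u / e`, with equality exactly at `u = e * a`, the integral is at most
`2 * log₂ t / e`, and at the points with `log₂ t = 2 ^ n * e / 2` only `log 2` is lost, which is
negligible against `log t`. These points lie in the blocks because `2 ≤ e ≤ 4`.
-/

open Real
open scoped Topology

theorem limsup_eq_of_eventually_le_of_tendsto_comp {α β γ : Type*}
    [ConditionallyCompleteLinearOrder γ] [TopologicalSpace γ] [OrderTopology γ]
    {l : Filter α} {l' : Filter β} [NeBot l'] {f : α → γ} {u : β → α} {c : γ}
    (hle : ∀ᶠ a in l, f a ≤ c) (hu : Tendsto u l' l) (hfu : Tendsto (f ∘ u) l' (𝓝 c)) :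
    limsup f l = c := by
  have hcob : IsCoboundedUnder (· ≤ ·) (map u l') f := hfu.isCoboundedUnder_le
  refine le_antisymm (limsup_le_of_le (hcob.mono (map_mono hu)) hle) ?_
  calc c = limsup (f ∘ u) l' := hfu.limsup_eq.symm
    _ = limsup f (map u l') := limsup_comp f u l'
    _ ≤ limsup f l := limsup_le_limsup_of_le hu hcob ⟨c, hle⟩

theorem mul_log_div_le_div_exp_one {a u : ℝ} (ha : 0 < a) (hu : 0 < u) :
    a * log (u / a) ≤ u / exp 1 := by
  have hlog : exp 1 * log (u / a) ≤ u / a := by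
    simpa only [exp_log (div_pos hu ha)] using exp_one_mul_le_exp (x := log (u / a))
  rw [le_div_iff₀ ha] at hlog
  rw [le_div_iff₀ (exp_pos 1)]
  linarith

section DoubleLog

variable {a b : ℝ} (c : ℝ)

theorem intervalIntegrable_const_div_log_div_self (ha : 1 < a) (hb : 1 < b) :
    IntervalIntegrable (fun s => c / log s / s) volume a b := by
  have one_lt : ∀ s ∈ uIcc a b, 1 < s := fun s hs => (lt_min ha hb).trans_le hs.1
  have ne_zero : ∀ s ∈ uIcc a b, s ≠ 0 := fun s hs => (one_pos.trans (one_lt s hs)).ne'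
  exact ((continuousOn_const.div (continuousOn_log.mono ne_zero)
    fun s hs => (log_pos (one_lt s hs)).ne').div continuousOn_id ne_zero).intervalIntegrable

theorem integral_const_div_log_div_self (ha : 1 < a) (hb : 1 < b) :
    ∫ s in a..b, c / log s / s = c * (log (log b) - log (log a)) := by
  have hderiv : ∀ s ∈ uIcc a b, HasDerivAt (fun s => c * log (log s)) (c / log s / s) s := by
    intro s hs
    have one_lt : 1 < s := (lt_min ha hb).trans_le hs.1
    exact ((hasDerivAt_log_log (by linarith) one_lt.ne' (by linarith)).const_mul c).congr_deriv
      (by ring)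
  rw [intervalIntegral.integral_eq_sub_of_hasDerivAt hderiv
    (intervalIntegrable_const_div_log_div_self c ha hb), mul_sub]

end DoubleLog

theorem pow_le_iff_natCast_le_logb {b t : ℝ} (hb : 1 < b) (ht : 0 < t) (k : ℕ) :
    b ^ k ≤ t ↔ (k : ℝ) ≤ logb b t := by
  rw [le_logb_iff_rpow_le hb ht, rpow_natCast]

theorem natFloor_logb_eq_iff {b t : ℝ} (hb : 1 < b) (ht : 1 ≤ t) {n : ℕ} :
    ⌊logb b t⌋₊ = n ↔ t ∈ Ico (b ^ n) (b ^ (n + 1)) := by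
  have ht₀ : 0 < t := one_pos.trans_le ht
  rw [Nat.floor_eq_iff (logb_nonneg hb ht), mem_Ico, pow_le_iff_natCast_le_logb hb ht₀,
    ← not_le (a := b ^ (n + 1)), pow_le_iff_natCast_le_logb hb ht₀, not_le, Nat.cast_succ]

theorem mem_Ico_two_pow_two_pow_iff {t : ℝ} (ht : 0 < t) {n : ℕ} :
    t ∈ Ico (2 ^ 2 ^ n) (2 ^ 2 ^ (n + 1)) ↔ logb 2 t ∈ Ico (2 ^ n) (2 ^ (n + 1)) := by
  simp only [mem_Ico, ← not_le (a := (2 : ℝ) ^ 2 ^ (n + 1)),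
    pow_le_iff_natCast_le_logb one_lt_two ht, Nat.cast_pow, Nat.cast_ofNat, not_le]

theorem one_lt_two_pow_two_pow (n : ℕ) : (1 : ℝ) < 2 ^ 2 ^ n :=
  one_lt_pow₀ one_lt_two (by positivity)

theorem two_pow_two_pow_le_succ (n : ℕ) : (2 : ℝ) ^ 2 ^ n ≤ 2 ^ 2 ^ (n + 1) := by
  gcongr <;> norm_num

theorem exists_mem_Ico_two_pow_two_pow {t : ℝ} (ht : 2 ≤ t) :
    ∃ n : ℕ, t ∈ Ico (2 ^ 2 ^ n) (2 ^ 2 ^ (n + 1)) := by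
  have ht₀ : 0 < t := by linarith
  have one_le_logb : 1 ≤ logb 2 t := by
    simpa using (pow_le_iff_natCast_le_logb one_lt_two ht₀ 1).1 (by simpa using ht)
  obtain ⟨n, hn⟩ := exists_nat_pow_near one_le_logb one_lt_two
  exact ⟨n, (mem_Ico_two_pow_two_pow_iff ht₀).2 hn⟩

theorem x0_of_lt_two {s : ℝ} (hs : s < 2) : x0 s = 0 :=
  if_neg hs.not_ge

theorem x0_of_mem_Ico {n : ℕ} {s : ℝ} (hs : s ∈ Ico (2 ^ 2 ^ n) (2 ^ 2 ^ (n + 1))) :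
    x0 s = 2 ^ n / log s := by
  have hlogb : logb 2 s ∈ Ico (2 ^ n) (2 ^ (n + 1)) :=
    (mem_Ico_two_pow_two_pow_iff (by linarith [one_lt_two_pow_two_pow n, hs.1])).1 hs
  have two_le : 2 ≤ s := (le_self_pow₀ one_le_two (by positivity)).trans hs.1
  have hfloor : ⌊logb 2 (logb 2 s)⌋₊ = n :=
    (natFloor_logb_eq_iff one_lt_two ((one_le_pow₀ one_le_two).trans hlogb.1)).2 hlogb
  rw [x0, if_pos two_le, hfloor]

theorem eqOn_x0_div_self_uIoo {n : ℕ} {t : ℝ} (ht : t ∈ Icc (2 ^ 2 ^ n) (2 ^ 2 ^ (n + 1))) :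
    EqOn (fun s => 2 ^ n / log s / s) (fun s => x0 s / s) (uIoo (2 ^ 2 ^ n) t) := by
  intro s hs
  rw [uIoo_of_le ht.1] at hs
  exact congrArg (· / s) (x0_of_mem_Ico ⟨hs.1.le, hs.2.trans_le ht.2⟩).symm

theorem eqOn_zero_x0_div_self_uIoo_one_two :
    EqOn (fun _ => 0) (fun s => x0 s / s) (uIoo 1 2) := by
  intro s hs
  rw [uIoo_of_le one_le_two] at hs
  simp only [x0_of_lt_two hs.2, zero_div]

theorem intervalIntegrable_x0_div_self_block {n : ℕ} {t : ℝ}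
    (ht : t ∈ Icc (2 ^ 2 ^ n) (2 ^ 2 ^ (n + 1))) :
    IntervalIntegrable (fun s => x0 s / s) volume (2 ^ 2 ^ n) t :=
  (intervalIntegrable_const_div_log_div_self _ (one_lt_two_pow_two_pow n)
    ((one_lt_two_pow_two_pow n).trans_le ht.1)).congr_uIoo (eqOn_x0_div_self_uIoo ht)

theorem integral_x0_div_self_block {n : ℕ} {t : ℝ}
    (ht : t ∈ Icc (2 ^ 2 ^ n) (2 ^ 2 ^ (n + 1))) :
    ∫ s in (2 ^ 2 ^ n)..t, x0 s / s = 2 ^ n * log (logb 2 t / 2 ^ n) := by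
  have one_lt : 1 < t := (one_lt_two_pow_two_pow n).trans_le ht.1
  have hlog : log (2 ^ 2 ^ n) = 2 ^ n * log 2 := by
    rw [log_pow, Nat.cast_pow, Nat.cast_ofNat]
  rw [← intervalIntegral.integral_congr_uIoo (eqOn_x0_div_self_uIoo ht),
    integral_const_div_log_div_self _ (one_lt_two_pow_two_pow n) one_lt, hlog,
    ← log_div (log_pos one_lt).ne' (by positivity), logb, div_div, mul_comm (log 2)]

theorem intervalIntegrable_x0_div_self_one_two_pow_two_pow (n : ℕ) :
    IntervalIntegrable (fun s => x0 s / s) volume 1 (2 ^ 2 ^ n) := by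
  induction n with
  | zero =>
    simpa only [pow_zero, pow_one] using
      (IntervalIntegrable.zero (E := ℝ)).congr_uIoo eqOn_zero_x0_div_self_uIoo_one_two
  | succ n ih =>
    exact ih.trans (intervalIntegrable_x0_div_self_block ⟨two_pow_two_pow_le_succ n, le_rfl⟩)

theorem integral_x0_div_self_one_two_pow_two_pow (n : ℕ) :
    ∫ s in (1 : ℝ)..(2 ^ 2 ^ n), x0 s / s = (2 ^ n - 1) * log 2 := by
  induction n with
  | zero =>
    simpa using (intervalIntegral.integral_congr_uIoo (μ := volume)
      eqOn_zero_x0_div_self_uIoo_one_two).symm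
  | succ n ih =>
    have hblock : (2 : ℝ) ^ 2 ^ (n + 1) ∈ Icc (2 ^ 2 ^ n) (2 ^ 2 ^ (n + 1)) :=
      ⟨two_pow_two_pow_le_succ n, le_rfl⟩
    have hlogb : logb 2 ((2 : ℝ) ^ 2 ^ (n + 1)) / 2 ^ n = 2 := by
      rw [logb_pow, logb_self_eq_one one_lt_two, Nat.cast_pow, Nat.cast_ofNat, pow_succ]
      field_simp
    rw [← intervalIntegral.integral_add_adjacent_intervals
      (intervalIntegrable_x0_div_self_one_two_pow_two_pow n)
      (intervalIntegrable_x0_div_self_block hblock), ih, integral_x0_div_self_block hblock, hlogb]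
    ring

theorem integral_x0_div_self {n : ℕ} {t : ℝ} (ht : t ∈ Icc (2 ^ 2 ^ n) (2 ^ 2 ^ (n + 1))) :
    ∫ s in (1 : ℝ)..t, x0 s / s = 2 ^ n * log (2 * logb 2 t / 2 ^ n) - log 2 := by
  have hlogb : 0 < logb 2 t :=
    logb_pos one_lt_two ((one_lt_two_pow_two_pow n).trans_le ht.1)
  rw [← intervalIntegral.integral_add_adjacent_intervals
    (intervalIntegrable_x0_div_self_one_two_pow_two_pow n)
    (intervalIntegrable_x0_div_self_block ht), integral_x0_div_self_one_two_pow_two_pow,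
    integral_x0_div_self_block ht, mul_div_assoc, log_mul two_ne_zero (by positivity)]
  ring

theorem Mop_x0_le {t : ℝ} (ht : 2 ≤ t) : Mop x0 t ≤ 2 / (exp 1 * log 2) := by
  obtain ⟨n, hn⟩ := exists_mem_Ico_two_pow_two_pow ht
  have hlog : 0 < log t := log_pos (by linarith)
  have hlogb : 0 < logb 2 t := logb_pos one_lt_two (by linarith)
  rw [Mop, div_le_iff₀ hlog]
  calc ∫ s in (1 : ℝ)..t, x0 s / s
      = 2 ^ n * log (2 * logb 2 t / 2 ^ n) - log 2 := integral_x0_div_self (Ico_subset_Icc_self hn)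
    _ ≤ 2 ^ n * log (2 * logb 2 t / 2 ^ n) := sub_le_self _ (log_nonneg one_le_two)
    _ ≤ 2 * logb 2 t / exp 1 := mul_log_div_le_div_exp_one (by positivity) (by positivity)
    _ = 2 / (exp 1 * log 2) * log t := by rw [logb]; ring

/-- The point `t_n` of the `n`-th block at which `Mop x0` comes closest to its limsup. It is the
paper's `2 ^ 2 ^ (1 / log 2 - 1 + n)`, rewritten with `2 ^ (1 / log 2) = e`. -/
noncomputable def peak (n : ℕ) : ℝ := 2 ^ (2 ^ n * (exp 1 / 2))

theorem logb_two_peak (n : ℕ) : logb 2 (peak n) = 2 ^ n * (exp 1 / 2) :=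
  logb_rpow two_pos (by norm_num)

theorem peak_pos (n : ℕ) : 0 < peak n :=
  rpow_pos_of_pos two_pos _

theorem peak_mem_Ico (n : ℕ) : peak n ∈ Ico (2 ^ 2 ^ n) (2 ^ 2 ^ (n + 1)) := by
  rw [mem_Ico_two_pow_two_pow_iff (peak_pos n), logb_two_peak, pow_succ]
  constructor
  · exact le_mul_of_one_le_right (by positivity) (by linarith [exp_one_gt_d9])
  · exact mul_lt_mul_of_pos_left (by linarith [exp_one_lt_d9]) (by positivity)

theorem tendsto_peak_atTop : Tendsto peak atTop atTop :=
  (tendsto_rpow_atTop_of_base_gt_one 2 one_lt_two).comp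
    ((tendsto_pow_atTop_atTop_of_one_lt one_lt_two).atTop_mul_const (by positivity))

theorem Mop_x0_peak (n : ℕ) :
    Mop x0 (peak n) = 2 / (exp 1 * log 2) - 2 / exp 1 / 2 ^ n := by
  have hratio : 2 * logb 2 (peak n) / 2 ^ n = exp 1 := by
    rw [logb_two_peak]
    field_simp
  have hlog : log (peak n) = 2 ^ n * (exp 1 / 2) * log 2 := log_rpow two_pos _
  rw [Mop, integral_x0_div_self (Ico_subset_Icc_self (peak_mem_Ico n)), hratio, log_exp, hlog]
  field_simp

theorem tendsto_Mop_x0_peak : Tendsto (Mop x0 ∘ peak) atTop (𝓝 (2 / (exp 1 * log 2))) := by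
  have hvanish : Tendsto (fun n : ℕ => 2 / exp 1 / 2 ^ n) atTop (𝓝 0) :=
    (tendsto_pow_atTop_atTop_of_one_lt one_lt_two).const_div_atTop _
  simpa only [Function.comp_def, Mop_x0_peak, sub_zero] using hvanish.const_sub _

/-- `limsup_{t→∞} (Mx)(t) = 2/(e log 2)`. -/
theorem limsup_Mop_x0 :
    Filter.limsup (Mop x0) Filter.atTop = 2 / (Real.exp 1 * Real.log 2) := by
  have hle : ∀ᶠ t in atTop, Mop x0 t ≤ 2 / (exp 1 * log 2) :=
    (eventually_ge_atTop 2).mono fun _ => Mop_x0_le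
  exact limsup_eq_of_eventually_le_of_tendsto_comp hle tendsto_peak_atTop tendsto_Mop_x0_peak
end

section
/- Let ψ : [0,∞) → [0,∞) be a concave function with lim_{t→0+} ψ(t) = 0 and lim_{t→∞} ψ(t) = ∞, satisfying lim_{t→∞} ψ(2t)/ψ(t) = 1. Then for every nonnegative nonincreasing measurable function f on (0,∞) with sup_{t>0} (1/ψ(t)) ∫_0^t f(s) ds < ∞, one has lim_{t→∞} (1/log t) ∫_1^t (f(s)/ψ(s)) ds = 0. -/
open MeasureTheory Filter Set

/-!
Let `F t = ∫_1^t f` and `A = F / ψ`. Since `ψ` is increasing, replacing `1 / ψ` by its value at the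
left endpoint gives
`∫_a^{ba} f / ψ ≤ (F (b a) - F a) / ψ a = A (b a) - A a + A (b a) (ψ (b a) / ψ a - 1)`.
Summed over `a = b ^ k`, `k < n`, the difference telescopes to a bounded quantity, and the last term
contributes `o(n)` because `A` is bounded and `ψ (b a) / ψ a → 1`. Hence `∫_1^{b^n} f / ψ = o(n)`,
and `n` is comparable to `log (b ^ n)`.
-/

open Asymptotics Topology

lemma tendsto_sum_range_div_of_le_sub_add {u A c : ℕ → ℝ} (hu : ∀ n, 0 ≤ u n)
    (hA : A =O[atTop] fun _ => (1 : ℝ)) (hc : Tendsto c atTop (𝓝 0))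
    (huA : ∀ n, u n ≤ A (n + 1) - A n + c n) :
    Tendsto (fun n : ℕ => (∑ k ∈ Finset.range n, u k) / n) atTop (𝓝 0) := by
  have hA_div : Tendsto (fun n : ℕ => (A n - A 0) / n) atTop (𝓝 0) :=
    ((hA.sub (isBigO_const_const _ one_ne_zero _)).trans_isLittleO
      (isLittleO_const_left.2 <| .inr <|
        tendsto_norm_atTop_atTop.comp tendsto_natCast_atTop_atTop)).tendsto_div_nhds_zero
  have hbound : Tendsto (fun n : ℕ => (A n - A 0) / n + (n : ℝ)⁻¹ * ∑ k ∈ Finset.range n, c k)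
      atTop (𝓝 0) := by
    simpa only [add_zero] using hA_div.add hc.cesaro
  refine squeeze_zero (fun n => div_nonneg (Finset.sum_nonneg fun k _ => hu k) n.cast_nonneg)
    (fun n => ?_) hbound
  calc (∑ k ∈ Finset.range n, u k) / n
      ≤ (∑ k ∈ Finset.range n, (A (k + 1) - A k + c k)) / n := by
        gcongr with k
        exact huA k
    _ = (A n - A 0) / n + (n : ℝ)⁻¹ * ∑ k ∈ Finset.range n, c k := by
        rw [Finset.sum_add_distrib, Finset.sum_range_sub, add_div, inv_mul_eq_div]

lemma tendsto_div_atTop_of_tendsto_natCast_div {H : ℝ → ℝ} {L : ℝ} (hH : MonotoneOn H (Ici 0))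
    (hlim : Tendsto (fun n : ℕ => H n / n) atTop (𝓝 L)) :
    Tendsto (fun x => H x / x) atTop (𝓝 L) := by
  have tendsto_round {N : ℝ → ℕ} (hN : Tendsto N atTop atTop)
      (hNx : Tendsto (fun x => (N x : ℝ) / x) atTop (𝓝 1)) :
      Tendsto (fun x => H (N x) / x) atTop (𝓝 L) := by
    have hmul := (hlim.comp hN).mul hNx
    rw [mul_one] at hmul
    refine hmul.congr' ?_
    filter_upwards [hN.eventually_ne_atTop 0] with x hx
    exact div_mul_div_cancel₀ (Nat.cast_ne_zero.2 hx)
  refine tendsto_of_tendsto_of_tendsto_of_le_of_le'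
    (tendsto_round tendsto_nat_floor_atTop tendsto_nat_floor_div_atTop)
    (tendsto_round tendsto_nat_ceil_atTop tendsto_nat_ceil_div_atTop) ?_ ?_
  all_goals
    filter_upwards [eventually_ge_atTop 0] with x hx
    gcongr
  · exact hH (mem_Ici.2 (Nat.cast_nonneg _)) hx (Nat.floor_le hx)
  · exact hH hx (mem_Ici.2 (Nat.cast_nonneg _)) (Nat.le_ceil x)

lemma tendsto_div_log_of_tendsto_pow_div {G : ℝ → ℝ} {b L : ℝ} (hb : 1 < b)
    (hG : MonotoneOn G (Ici 1)) (hlim : Tendsto (fun n : ℕ => G (b ^ n) / n) atTop (𝓝 L)) :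
    Tendsto (fun t => G t / Real.log t) atTop (𝓝 (L / Real.log b)) := by
  have hmono : MonotoneOn (fun x : ℝ => G (b ^ x)) (Ici 0) := fun x hx y hy hxy =>
    hG (Real.one_le_rpow hb.le hx) (Real.one_le_rpow hb.le hy)
      (Real.rpow_le_rpow_of_exponent_le hb.le hxy)
  have hrpow : Tendsto (fun x : ℝ => G (b ^ x) / x) atTop (𝓝 L) :=
    tendsto_div_atTop_of_tendsto_natCast_div hmono (by simpa only [Real.rpow_natCast] using hlim)
  refine ((hrpow.comp (Real.tendsto_logb_atTop hb)).div_const (Real.log b)).congr' ?_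
  filter_upwards [eventually_gt_atTop 0] with t ht
  have hlog : Real.log b ≠ 0 := (Real.log_pos hb).ne'
  rw [Function.comp_apply, Real.rpow_logb (one_pos.trans hb) hb.ne' ht, Real.logb, div_div,
    div_mul_cancel₀ _ hlog]

section IntegralDiv

variable {ψ f : ℝ → ℝ} {μ : Measure ℝ} {a b : ℝ}

lemma intervalIntegrable_div_of_monotoneOn (hab : a ≤ b) (hψ : MonotoneOn ψ (Icc a b))
    (hψa : 0 < ψ a) (hf : IntervalIntegrable f μ a b) :
    IntervalIntegrable (fun s => f s / ψ s) μ a b := by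
  rw [intervalIntegrable_iff_integrableOn_Ioc_of_le hab] at hf ⊢
  have hmeas : AEMeasurable ψ (μ.restrict (Ioc a b)) :=
    aemeasurable_restrict_of_monotoneOn measurableSet_Ioc (hψ.mono Ioc_subset_Icc_self)
  simp only [div_eq_mul_inv]
  refine hf.mul_bdd (c := (ψ a)⁻¹) hmeas.inv.aestronglyMeasurable
    (ae_restrict_of_forall_mem measurableSet_Ioc fun s hs => ?_)
  have hle : ψ a ≤ ψ s := hψ (left_mem_Icc.2 hab) (Ioc_subset_Icc_self hs) hs.1.le
  rw [norm_inv, Real.norm_of_nonneg (hψa.le.trans hle)]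
  gcongr

lemma monotoneOn_integral_div (hψ : MonotoneOn ψ (Ici a)) (hψa : 0 < ψ a)
    (hf0 : ∀ t ≥ a, 0 ≤ f t) (hfint : ∀ t ≥ a, IntervalIntegrable f μ a t) :
    MonotoneOn (fun t => ∫ s in a..t, f s / ψ s ∂μ) (Ici a) := by
  intro x hx y hy hxy
  refine intervalIntegral.integral_mono_interval le_rfl hx hxy
    (ae_restrict_of_forall_mem measurableSet_Ioc fun s hs => ?_)
    (intervalIntegrable_div_of_monotoneOn hy (hψ.mono Icc_subset_Ici_self) hψa (hfint y hy))
  exact div_nonneg (hf0 s hs.1.le) (hψa.le.trans (hψ self_mem_Ici hs.1.le hs.1.le))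

lemma integral_div_le_integral_div_left (hab : a ≤ b) (hψ : MonotoneOn ψ (Icc a b))
    (hψa : 0 < ψ a) (hf : IntervalIntegrable f μ a b) (hf0 : ∀ s ∈ Icc a b, 0 ≤ f s) :
    ∫ s in a..b, f s / ψ s ∂μ ≤ (∫ s in a..b, f s ∂μ) / ψ a := by
  rw [← intervalIntegral.integral_div]
  refine intervalIntegral.integral_mono_on hab
    (intervalIntegrable_div_of_monotoneOn hab hψ hψa hf) (hf.div_const _) fun s hs => ?_
  exact div_le_div_of_nonneg_left (hf0 s hs) hψa (hψ (left_mem_Icc.2 hab) hs hs.1)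

lemma integral_div_le_sub_add_mul {c : ℝ} (hab : a ≤ b) (hψ : MonotoneOn ψ (Icc a b))
    (hψa : 0 < ψ a) (hca : IntervalIntegrable f μ c a) (hcb : IntervalIntegrable f μ c b)
    (hf0 : ∀ s ∈ Icc a b, 0 ≤ f s) :
    ∫ s in a..b, f s / ψ s ∂μ ≤
      (∫ s in c..b, f s ∂μ) / ψ b - (∫ s in c..a, f s ∂μ) / ψ a
        + (∫ s in c..b, f s ∂μ) / ψ b * (ψ b / ψ a - 1) := by
  have hψb : 0 < ψ b := hψa.trans_le (hψ (left_mem_Icc.2 hab) (right_mem_Icc.2 hab) hab)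
  calc ∫ s in a..b, f s / ψ s ∂μ
      ≤ (∫ s in a..b, f s ∂μ) / ψ a :=
        integral_div_le_integral_div_left hab hψ hψa (hca.symm.trans hcb) hf0
    _ = ((∫ s in c..b, f s ∂μ) - ∫ s in c..a, f s ∂μ) / ψ a := by
        rw [intervalIntegral.integral_interval_sub_left hcb hca]
    _ = _ := by
        field_simp
        ring

lemma tendsto_integral_div_seq_div {x : ℕ → ℝ} (hx : Monotone x)
    (hψ : MonotoneOn ψ (Ici (x 0))) (hψ0 : 0 < ψ (x 0))
    (hratio : Tendsto (fun n => ψ (x (n + 1)) / ψ (x n)) atTop (𝓝 1))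
    (hf0 : ∀ t ≥ x 0, 0 ≤ f t) (hfint : ∀ n, IntervalIntegrable f μ (x 0) (x n))
    (hfψ : (fun n => ∫ s in x 0..x n, f s ∂μ) =O[atTop] fun n => ψ (x n)) :
    Tendsto (fun n : ℕ => (∫ s in x 0..x n, f s / ψ s ∂μ) / n) atTop (𝓝 0) := by
  have le_succ (n : ℕ) : x n ≤ x (n + 1) := hx n.le_succ
  have ge_of_mem (n : ℕ) : ∀ s ∈ Icc (x n) (x (n + 1)), x 0 ≤ s :=
    fun s hs => (hx n.zero_le).trans hs.1
  have mono_on (n : ℕ) : MonotoneOn ψ (Icc (x n) (x (n + 1))) := hψ.mono (ge_of_mem n)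
  have psi_pos {s : ℝ} (hs : x 0 ≤ s) : 0 < ψ s := hψ0.trans_le (hψ self_mem_Ici hs hs)
  set A : ℕ → ℝ := fun n => (∫ s in x 0..x n, f s ∂μ) / ψ (x n)
  have hA : A =O[atTop] fun _ => (1 : ℝ) :=
    (isBigO_one_iff ℝ).2 (div_isBoundedUnder_of_isBigO hfψ)
  have herror : Tendsto (fun n => A (n + 1) * (ψ (x (n + 1)) / ψ (x n) - 1)) atTop (𝓝 0) :=
    isBoundedUnder_le_mul_tendsto_zero
      ((isBigO_one_iff ℝ).1 (hA.comp_tendsto (tendsto_add_atTop_nat 1)))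
      (tendsto_sub_nhds_zero_iff.2 hratio)
  have hsum (n : ℕ) : ∑ k ∈ Finset.range n, ∫ s in x k..x (k + 1), f s / ψ s ∂μ =
      ∫ s in x 0..x n, f s / ψ s ∂μ :=
    intervalIntegral.sum_integral_adjacent_intervals fun k _ =>
      intervalIntegrable_div_of_monotoneOn (le_succ k) (mono_on k) (psi_pos (hx k.zero_le))
        ((hfint k).symm.trans (hfint (k + 1)))
  simp only [← hsum]
  refine tendsto_sum_range_div_of_le_sub_add (fun n => ?_) hA herror fun n => ?_
  · exact intervalIntegral.integral_nonneg (le_succ n) fun s hs =>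
      div_nonneg (hf0 s (ge_of_mem n s hs)) (psi_pos (ge_of_mem n s hs)).le
  · exact integral_div_le_sub_add_mul (le_succ n) (mono_on n) (psi_pos (hx n.zero_le))
      (hfint n) (hfint (n + 1)) fun s hs => hf0 s (ge_of_mem n s hs)

end IntegralDiv

lemma monotoneOn_of_concaveOn_of_tendsto_atTop {ψ : ℝ → ℝ} {a : ℝ} (hψ : ConcaveOn ℝ (Ici a) ψ)
    (htop : Tendsto ψ atTop atTop) : MonotoneOn ψ (Ici a) := by
  intro x hx y hy hxy
  by_contra! hlt
  obtain ⟨z, hyz, hψz⟩ := ((eventually_ge_atTop y).and (htop.eventually_gt_atTop (ψ y))).exists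
  have hmin : min (ψ x) (ψ z) ≤ ψ y :=
    hψ.ge_on_segment hx (le_trans hy hyz) (Icc_subset_segment ⟨hxy, hyz⟩)
  exact hmin.not_gt (lt_min hlt hψz)

lemma pos_of_concaveOn_of_tendsto_atTop {ψ : ℝ → ℝ} {a x : ℝ} (hψ : ConcaveOn ℝ (Ici a) ψ)
    (hψa : 0 ≤ ψ a) (htop : Tendsto ψ atTop atTop) (hx : a < x) : 0 < ψ x := by
  by_contra! hneg
  obtain ⟨z, hxz, hψz⟩ := ((eventually_gt_atTop x).and (htop.eventually_gt_atTop 0)).exists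
  have hlt : ψ a < ψ x :=
    hψ.left_lt_of_lt_right self_mem_Ici (hx.trans hxz).le
      (Ioo_subset_openSegment ⟨hx, hxz⟩) (hneg.trans_lt hψz)
  exact (hlt.trans_le hneg).not_ge hψa

namespace InOmegaClass

variable {ψ : ℝ → ℝ}

lemma monotoneOn (hψ : InOmegaClass ψ) : MonotoneOn ψ (Ici 0) :=
  monotoneOn_of_concaveOn_of_tendsto_atTop hψ.1 hψ.2.2.2

lemma pos_s11 (hψ : InOmegaClass ψ) {t : ℝ} (ht : 0 < t) : 0 < ψ t :=
  pos_of_concaveOn_of_tendsto_atTop hψ.1 (hψ.2.1 0 le_rfl) hψ.2.2.2 ht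

end InOmegaClass

lemma isBigO_integral_of_avA_le {ψ f : ℝ → ℝ} (hψ : ∀ t > 0, 0 < ψ t)
    (hf0 : ∀ t > 0, 0 ≤ f t) (hfint : ∀ t > 0, IntegrableOn f (Ioc 0 t))
    (hbdd : ∃ C, ∀ t > 0, avA ψ f t ≤ C) :
    (fun t => ∫ s in (1 : ℝ)..t, f s) =O[atTop] ψ := by
  obtain ⟨C, hC⟩ := hbdd
  refine IsBigO.of_bound C ?_
  filter_upwards [eventually_ge_atTop 1] with t ht
  have ht0 : 0 < t := one_pos.trans_le ht
  have hnonneg : 0 ≤ ∫ s in (1 : ℝ)..t, f s :=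
    intervalIntegral.integral_nonneg ht fun s hs => hf0 s (one_pos.trans_le hs.1)
  rw [Real.norm_of_nonneg hnonneg, Real.norm_of_nonneg (hψ t ht0).le]
  calc ∫ s in (1 : ℝ)..t, f s
      ≤ ∫ s in (0 : ℝ)..t, f s :=
        intervalIntegral.integral_mono_interval zero_le_one ht le_rfl
          (ae_restrict_of_forall_mem measurableSet_Ioc fun s hs => hf0 s hs.1)
          ((intervalIntegrable_iff_integrableOn_Ioc_of_le ht0.le).2 (hfint t ht0))
    _ ≤ C * ψ t := (div_le_iff₀ (hψ t ht0)).1 (hC t ht0)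

theorem cesaro_mean_tf_over_psi_tendsto_zero_general {ψ f : ℝ → ℝ} {b : ℝ} (hb : 1 < b)
    (hψ : MonotoneOn ψ (Ici 1)) (hψ1 : 0 < ψ 1)
    (hlim : Tendsto (fun t => ψ (b * t) / ψ t) atTop (𝓝 1))
    (hf0 : ∀ t ≥ 1, 0 ≤ f t) (hfint : ∀ t ≥ 1, IntegrableOn f (Ioc 1 t))
    (hfψ : (fun t => ∫ s in (1 : ℝ)..t, f s) =O[atTop] ψ) :
    Tendsto (fun t => (∫ s in (1 : ℝ)..t, f s / ψ s) / Real.log t) atTop (𝓝 0) := by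
  have hfii (t : ℝ) (ht : t ≥ 1) : IntervalIntegrable f volume 1 t :=
    (intervalIntegrable_iff_integrableOn_Ioc_of_le ht).2 (hfint t ht)
  have hpow : Tendsto (fun n : ℕ => b ^ n) atTop atTop := tendsto_pow_atTop_atTop_of_one_lt hb
  have hratio : Tendsto (fun n => ψ (b ^ (n + 1)) / ψ (b ^ n)) atTop (𝓝 1) := by
    simpa only [Function.comp_def, ← pow_succ'] using hlim.comp hpow
  have hgeom : Tendsto (fun n : ℕ => (∫ s in (1 : ℝ)..b ^ n, f s / ψ s) / n) atTop (𝓝 0) := by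
    have hseq := tendsto_integral_div_seq_div (ψ := ψ) (f := f) (μ := volume)
      (pow_right_mono₀ hb.le)
    simp only [pow_zero] at hseq
    exact hseq hψ hψ1 hratio hf0 (fun n => hfii _ (one_le_pow₀ hb.le)) (hfψ.comp_tendsto hpow)
  simpa only [zero_div] using tendsto_div_log_of_tendsto_pow_div hb
    (monotoneOn_integral_div hψ hψ1 hf0 hfii) hgeom

/-- If `ψ ∈ Ω` satisfies `ψ(2t)/ψ(t) → 1`, then for every nonnegative nonincreasing
`f ∈ M_ψ`, the logarithmic Cesàro mean of `s f(s)/ψ(s)` tends to `0`: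
`(1/log t) ∫_1^t f(s)/ψ(s) ds → 0` as `t → ∞`. -/
theorem cesaro_mean_tf_over_psi_tendsto_zero (ψ : ℝ → ℝ) (hψ : InOmegaClass ψ)
    (hlim : Filter.Tendsto (fun t => ψ (2 * t) / ψ t) Filter.atTop (nhds 1))
    (f : ℝ → ℝ) (hfmeas : Measurable f)
    (hfpos : ∀ t > (0:ℝ), 0 ≤ f t) (hfmono : AntitoneOn f (Set.Ioi 0))
    (hfint : ∀ t > (0:ℝ), IntegrableOn f (Set.Ioc 0 t))
    (hfbdd : ∃ C : ℝ, ∀ t > (0:ℝ), avA ψ f t ≤ C) :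
    Filter.Tendsto (fun t => (∫ s in (1:ℝ)..t, f s / ψ s) / Real.log t)
      Filter.atTop (nhds 0) :=
  cesaro_mean_tf_over_psi_tendsto_zero_general one_lt_two
    (hψ.monotoneOn.mono (Ici_subset_Ici.2 zero_le_one)) (hψ.pos_s11 one_pos) hlim
    (fun t ht => hfpos t (one_pos.trans_le ht))
    (fun t ht => (hfint t (one_pos.trans_le ht)).mono_set (Ioc_subset_Ioc_left zero_le_one))
    (isBigO_integral_of_avA_le (fun _ => hψ.pos_s11) hfpos hfint hfbdd)
end

section
/- Let γ be a generalized limit on the bounded measurable functions on (0,∞), i.e. a linear functional with liminf_{t→∞} x(t) ≤ γ(x) ≤ limsup_{t→∞} x(t) for all bounded measurable x. Define ω(x) := γ(Mx) where (Mx)(t) = (1/log t) ∫_1^t x(s) ds/s for t > e and (Mx)(t) := 0 for t ≤ e. Then ω is a dilation invariant generalized limit: ω is linear, liminf_{t→∞} x(t) ≤ ω(x) ≤ limsup_{t→∞} x(t) for all bounded measurable x, and ω(σ_s x) = ω(x) for all s > 0, where (σ_s x)(t) = x(t/s). -/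
open MeasureTheory Filter Set

/-- The logarithmic Cesàro mean, `(Mx)(t) = (1/log t) ∫_1^t x(s) ds/s` for `t > e`
and `(Mx)(t) = 0` for `t ≤ e`. -/
noncomputable def MopE (x : ℝ → ℝ) : ℝ → ℝ := fun t =>
  if Real.exp 1 < t then (∫ s in (1:ℝ)..t, x s / s) / Real.log t else 0

open scoped Topology

/-!
Replacing the bounds of the integral `∫ u in 1..t, x u / u` by `a` and `c * t`, for fixed
`a, c > 0`, changes it by a bounded amount, because `∫ du / u` is invariant under dilations; after
division by `log t` the change vanishes at infinity. Since a dilation of `x` only rescales both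
bounds, `M (σ_s x) - M x → 0`. Moving the lower bound to a point beyond which `x ≤ b` shows
`limsup M x ≤ b`, so `M` does not increase `limsup`, nor, by `x ↦ -x`, decrease `liminf`.
-/

theorem limsup_neg_eq_neg_liminf {ι : Type*} {F : Filter ι} [NeBot F] {u : ι → ℝ}
    (hle : IsBoundedUnder (· ≤ ·) F u) (hge : IsBoundedUnder (· ≥ ·) F u) :
    limsup (-u) F = -liminf u F :=
  (Antitone.map_liminf_of_continuousAt (fun _ _ => neg_le_neg) u continuous_neg.continuousAt
    hle.isCoboundedUnder_ge hge).symm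

theorem pos_of_mem_uIcc {α : Type*} [LinearOrder α] [Zero α] {a b s : α} (ha : 0 < a) (hb : 0 < b)
    (hs : s ∈ uIcc a b) : 0 < s :=
  (lt_min ha hb).trans_le hs.1

section LogIntegral

variable {x : ℝ → ℝ} {a b C s : ℝ}

theorem intervalIntegrable_div_id (hx : IntervalIntegrable x volume a b) (ha : 0 < a)
    (hb : 0 < b) : IntervalIntegrable (fun s => x s / s) volume a b :=
  hx.mul_continuousOn (continuousOn_id.inv₀ fun _ hs => (pos_of_mem_uIcc ha hb hs).ne')

theorem integral_const_div_id (C : ℝ) (ha : 0 < a) (hb : 0 < b) :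
    ∫ s in a..b, C / s = C * Real.log (b / a) := by
  simp only [div_eq_mul_inv C, intervalIntegral.integral_const_mul, integral_inv_of_pos ha hb]

theorem integral_div_id_le (hx : IntervalIntegrable x volume a b) (ha : 0 < a) (hab : a ≤ b)
    (hC : ∀ s ∈ Icc a b, x s ≤ C) : ∫ s in a..b, x s / s ≤ C * Real.log (b / a) := by
  have hb : 0 < b := ha.trans_le hab
  rw [← integral_const_div_id C ha hb]
  refine intervalIntegral.integral_mono_on hab (intervalIntegrable_div_id hx ha hb)
    (intervalIntegrable_div_id intervalIntegrable_const ha hb) fun s hs => ?_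
  exact div_le_div_of_nonneg_right (hC s hs) (ha.le.trans hs.1)

theorem abs_integral_div_id_le (ha : 0 < a) (hb : 0 < b) (hC : ∀ s ∈ uIcc a b, |x s| ≤ C) :
    |∫ s in a..b, x s / s| ≤ C * |Real.log (b / a)| := by
  have hC_nonneg : 0 ≤ C := (abs_nonneg _).trans (hC a left_mem_uIcc)
  have hbound : ∀ᵐ s ∂volume.restrict (uIoc a b), ‖x s / s‖ ≤ C / s := by
    filter_upwards [ae_restrict_mem measurableSet_uIoc] with s hs
    have hs_mem : s ∈ uIcc a b := uIoc_subset_uIcc hs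
    have hs_pos : 0 < s := pos_of_mem_uIcc ha hb hs_mem
    rw [Real.norm_eq_abs, abs_div, abs_of_pos hs_pos]
    exact div_le_div_of_nonneg_right (hC s hs_mem) hs_pos.le
  calc |∫ s in a..b, x s / s| ≤ |∫ s in a..b, C / s| :=
        intervalIntegral.norm_integral_le_abs_of_norm_le hbound
          (intervalIntegrable_div_id intervalIntegrable_const ha hb)
    _ = C * |Real.log (b / a)| := by
        rw [integral_const_div_id C ha hb, abs_mul, abs_of_nonneg hC_nonneg]

theorem integral_comp_div_div_id (x : ℝ → ℝ) (a b : ℝ) (hs : s ≠ 0) :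
    ∫ u in a..b, x (u / s) / u = ∫ v in a / s..b / s, x v / v := by
  rw [← intervalIntegral.inv_smul_integral_comp_div (fun v => x v / v) s,
    ← intervalIntegral.integral_smul]
  congr 1 with u
  rw [smul_eq_mul]
  field_simp

end LogIntegral

namespace BddPos

variable {x y : ℝ → ℝ}

theorem neg (hx : BddPos x) : BddPos (-x) := by
  simpa only [BddPos, Pi.neg_apply, abs_neg] using hx

theorem sub (hx : BddPos x) (hy : BddPos y) : BddPos (x - y) := by
  obtain ⟨C, hC⟩ := hx
  obtain ⟨D, hD⟩ := hy
  exact ⟨C + D, fun t ht => (abs_sub _ _).trans (add_le_add (hC t ht) (hD t ht))⟩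

theorem comp_div (hx : BddPos x) {s : ℝ} (hs : 0 < s) : BddPos fun t => x (t / s) := by
  obtain ⟨C, hC⟩ := hx
  exact ⟨C, fun t ht => hC _ (div_pos ht hs)⟩

theorem isBoundedUnder_abs (hx : BddPos x) : IsBoundedUnder (· ≤ ·) atTop fun t => |x t| := by
  obtain ⟨C, hC⟩ := hx
  exact isBoundedUnder_of_eventually_le ((eventually_gt_atTop 0).mono hC)

theorem isBoundedUnder_le (hx : BddPos x) : IsBoundedUnder (· ≤ ·) atTop x :=
  (isBoundedUnder_le_abs.1 hx.isBoundedUnder_abs).1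

theorem isBoundedUnder_ge (hx : BddPos x) : IsBoundedUnder (· ≥ ·) atTop x :=
  (isBoundedUnder_le_abs.1 hx.isBoundedUnder_abs).2

theorem limsup_neg (hx : BddPos x) : limsup (-x) atTop = -liminf x atTop :=
  limsup_neg_eq_neg_liminf hx.isBoundedUnder_le hx.isBoundedUnder_ge

theorem intervalIntegrable (hx : BddPos x) (hxm : Measurable x) {a b : ℝ} (ha : 0 < a)
    (hb : 0 < b) : IntervalIntegrable x volume a b := by
  obtain ⟨C, hC⟩ := hx
  refine (intervalIntegrable_const (c := C)).mono_fun' hxm.aestronglyMeasurable ?_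
  filter_upwards [ae_restrict_mem measurableSet_uIoc] with s hs
  exact hC s (pos_of_mem_uIcc ha hb (uIoc_subset_uIcc hs))

theorem intervalIntegrable_div_id (hx : BddPos x) (hxm : Measurable x) {a b : ℝ} (ha : 0 < a)
    (hb : 0 < b) : IntervalIntegrable (fun s => x s / s) volume a b :=
  _root_.intervalIntegrable_div_id (hx.intervalIntegrable hxm ha hb) ha hb

end BddPos

section LogMean

variable {x y : ℝ → ℝ}

theorem one_lt_of_exp_one_lt {t : ℝ} (ht : Real.exp 1 < t) : 1 < t :=
  (Real.one_lt_exp_iff.2 one_pos).trans ht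

theorem mopE_of_exp_one_lt (x : ℝ → ℝ) {t : ℝ} (ht : Real.exp 1 < t) :
    MopE x t = (∫ s in (1 : ℝ)..t, x s / s) / Real.log t :=
  if_pos ht

theorem mopE_add (hx : BddPos x) (hxm : Measurable x) (hy : BddPos y) (hym : Measurable y) :
    MopE (x + y) = MopE x + MopE y := by
  funext t
  simp only [MopE, Pi.add_apply]
  split_ifs with ht
  · have ht_pos : 0 < t := one_pos.trans (one_lt_of_exp_one_lt ht)
    simp only [add_div]
    rw [intervalIntegral.integral_add (hx.intervalIntegrable_div_id hxm one_pos ht_pos)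
      (hy.intervalIntegrable_div_id hym one_pos ht_pos), add_div]
  · rw [add_zero]

theorem mopE_smul (c : ℝ) (x : ℝ → ℝ) : MopE (c • x) = c • MopE x := by
  funext t
  simp only [MopE, Pi.smul_apply, smul_eq_mul, mul_ite, mul_zero, mul_div_assoc,
    intervalIntegral.integral_const_mul]

theorem mopE_neg (x : ℝ → ℝ) : MopE (-x) = -MopE x := by
  simpa only [neg_one_smul] using mopE_smul (-1) x

theorem BddPos.mopE (hx : BddPos x) : BddPos (MopE x) := by
  obtain ⟨C, hC⟩ := hx
  refine ⟨C, fun t ht => ?_⟩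
  simp only [MopE]
  split_ifs with hexp
  · have hlog : 0 < Real.log t := Real.log_pos (one_lt_of_exp_one_lt hexp)
    have hintegral_le : |∫ s in (1 : ℝ)..t, x s / s| ≤ C * Real.log t := by
      simpa only [div_one, abs_of_pos hlog] using
        abs_integral_div_id_le one_pos ht fun s hs => hC s (pos_of_mem_uIcc one_pos ht hs)
    rwa [abs_div, abs_of_pos hlog, div_le_iff₀ hlog]
  · exact abs_zero.trans_le ((abs_nonneg _).trans (hC t ht))

theorem BddPos.continuousOn_integral_div_id (hx : BddPos x) (hxm : Measurable x) :
    ContinuousOn (fun t => ∫ s in (1 : ℝ)..t, x s / s) (Ioi 1) := by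
  intro t (ht : 1 < t)
  have hcont := intervalIntegral.continuousOn_primitive_interval'
    (hx.intervalIntegrable_div_id hxm one_pos (by linarith : 0 < t + 1)) left_mem_uIcc
  rw [uIcc_of_le (by linarith)] at hcont
  exact (hcont.continuousAt (Icc_mem_nhds ht (lt_add_one t))).continuousWithinAt

theorem BddPos.measurable_mopE (hx : BddPos x) (hxm : Measurable x) : Measurable (MopE x) := by
  have hsub : Ioi (Real.exp 1) ⊆ Ioi 1 := fun _ => one_lt_of_exp_one_lt
  have hlog : ∀ t ∈ Ioi (Real.exp 1), Real.log t ≠ 0 := fun t ht => (Real.log_pos (hsub ht)).ne'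
  have hcont : ContinuousOn (fun t => (∫ s in (1 : ℝ)..t, x s / s) / Real.log t)
      (Ioi (Real.exp 1)) :=
    ((hx.continuousOn_integral_div_id hxm).mono hsub).div
      (Real.continuousOn_log.mono fun t ht => (one_pos.trans (hsub ht)).ne') hlog
  exact hcont.measurable_piecewise continuousOn_const measurableSet_Ioi

theorem BddPos.tendsto_integral_div_log_sub_mopE (hx : BddPos x) (hxm : Measurable x) {a c : ℝ}
    (ha : 0 < a) (hc : 0 < c) :
    Tendsto (fun t => (∫ u in a..c * t, x u / u) / Real.log t - MopE x t) atTop (𝓝 0) := by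
  obtain ⟨C, hC⟩ := id hx
  have hbound {p q : ℝ} (hp : 0 < p) (hq : 0 < q) :
      |∫ u in p..q, x u / u| ≤ C * |Real.log (q / p)| :=
    abs_integral_div_id_le hp hq fun u hu => hC u (pos_of_mem_uIcc hp hq hu)
  have hintegrable {p q : ℝ} (hp : 0 < p) (hq : 0 < q) :
      IntervalIntegrable (fun u => x u / u) volume p q :=
    hx.intervalIntegrable_div_id hxm hp hq
  refine squeeze_zero_norm' ?_
    (Real.tendsto_log_atTop.const_div_atTop (C * |Real.log (1 / a)| + C * |Real.log c|))
  filter_upwards [eventually_gt_atTop (Real.exp 1)] with t hexp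
  have ht : 0 < t := one_pos.trans (one_lt_of_exp_one_lt hexp)
  have hct : 0 < c * t := mul_pos hc ht
  have hlog : 0 < Real.log t := Real.log_pos (one_lt_of_exp_one_lt hexp)
  rw [mopE_of_exp_one_lt x hexp, ← sub_div, Real.norm_eq_abs, abs_div, abs_of_pos hlog]
  refine div_le_div_of_nonneg_right ?_ hlog.le
  calc |(∫ u in a..c * t, x u / u) - ∫ u in (1 : ℝ)..t, x u / u|
      = |(∫ u in a..1, x u / u) - ∫ u in c * t..t, x u / u| := by
        rw [intervalIntegral.integral_interval_sub_interval_comm (hintegrable ha hct)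
          (hintegrable one_pos ht) (hintegrable ha one_pos)]
    _ = |(∫ u in a..1, x u / u) + ∫ u in t..c * t, x u / u| := by
        rw [intervalIntegral.integral_symm t, sub_neg_eq_add]
    _ ≤ C * |Real.log (1 / a)| + C * |Real.log (c * t / t)| :=
        (abs_add_le _ _).trans (add_le_add (hbound ha one_pos) (hbound ht hct))
    _ = C * |Real.log (1 / a)| + C * |Real.log c| := by rw [mul_div_cancel_right₀ c ht.ne']

theorem BddPos.tendsto_mopE_comp_div_sub_mopE (hx : BddPos x) (hxm : Measurable x) {s : ℝ}
    (hs : 0 < s) : Tendsto (MopE (fun t => x (t / s)) - MopE x) atTop (𝓝 0) := by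
  refine (hx.tendsto_integral_div_log_sub_mopE hxm (one_div_pos.2 hs) (inv_pos.2 hs)).congr' ?_
  filter_upwards [eventually_gt_atTop (Real.exp 1)] with t ht
  rw [Pi.sub_apply, mopE_of_exp_one_lt (fun t => x (t / s)) ht,
    integral_comp_div_div_id x 1 t hs.ne', inv_mul_eq_div]

theorem BddPos.limsup_mopE_le_of_eventually_le (hx : BddPos x) (hxm : Measurable x) {b : ℝ}
    (hb : ∀ᶠ t in atTop, x t ≤ b) : limsup (MopE x) atTop ≤ b := by
  obtain ⟨T, hT, hxT⟩ : ∃ T > 0, ∀ t ≥ T, x t ≤ b :=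
    ((eventually_gt_atTop 0).and (eventually_forall_ge_atTop.2 hb)).exists
  let d : ℝ → ℝ := fun t => (∫ u in T..t, x u / u) / Real.log t - MopE x t
  have hd : Tendsto d atTop (𝓝 0) := by
    simpa only [one_mul] using hx.tendsto_integral_div_log_sub_mopE hxm hT one_pos
  have hlim : Tendsto (fun t => b - b * Real.log T / Real.log t - d t) atTop (𝓝 b) := by
    have hdiv := Real.tendsto_log_atTop.const_div_atTop (b * Real.log T)
    simpa only [sub_zero] using (hdiv.const_sub b).sub hd
  have hle : MopE x ≤ᶠ[atTop] fun t => b - b * Real.log T / Real.log t - d t := by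
    filter_upwards [eventually_gt_atTop 1, eventually_ge_atTop T] with t ht hTt
    have hlog : 0 < Real.log t := Real.log_pos ht
    have hmean_le : (∫ u in T..t, x u / u) / Real.log t ≤ b - b * Real.log T / Real.log t := by
      rw [div_le_iff₀ hlog, sub_mul, div_mul_cancel₀ _ hlog.ne', ← mul_sub,
        ← Real.log_div (hT.trans_le hTt).ne' hT.ne']
      exact integral_div_id_le (hx.intervalIntegrable hxm hT (hT.trans_le hTt)) hT hTt
        fun u hu => hxT u hu.1
    simp only [d]
    linarith
  exact (limsup_le_limsup hle hx.mopE.isBoundedUnder_ge.isCoboundedUnder_le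
    hlim.isBoundedUnder_le).trans_eq hlim.limsup_eq

theorem BddPos.limsup_mopE_le_limsup (hx : BddPos x) (hxm : Measurable x) :
    limsup (MopE x) atTop ≤ limsup x atTop :=
  le_of_forall_gt_imp_ge_of_dense fun _ hb => hx.limsup_mopE_le_of_eventually_le hxm <|
    (eventually_lt_of_limsup_lt hb hx.isBoundedUnder_le).mono fun _ => le_of_lt

theorem BddPos.liminf_le_liminf_mopE (hx : BddPos x) (hxm : Measurable x) :
    liminf x atTop ≤ liminf (MopE x) atTop := by
  rw [← neg_le_neg_iff, ← hx.limsup_neg, ← hx.mopE.limsup_neg, ← mopE_neg]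
  exact hx.neg.limsup_mopE_le_limsup hxm.neg

end LogMean

namespace IsGenLim

variable {γ : (ℝ → ℝ) → ℝ} {x y : ℝ → ℝ}

theorem eq_of_tendsto (hγ : IsGenLim γ) (hx : BddPos x) (hxm : Measurable x) {l : ℝ}
    (h : Tendsto x atTop (𝓝 l)) : γ x = l := by
  obtain ⟨hlower, hupper⟩ := hγ.2.2 x hxm hx
  exact le_antisymm (hupper.trans_eq h.limsup_eq) (h.liminf_eq.symm.trans_le hlower)

theorem eq_of_tendsto_sub (hγ : IsGenLim γ) (hx : BddPos x) (hxm : Measurable x) (hy : BddPos y)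
    (hym : Measurable y) (h : Tendsto (x - y) atTop (𝓝 0)) : γ x = γ y := by
  calc γ x = γ (y + (x - y)) := by rw [add_sub_cancel]
    _ = γ y + γ (x - y) := hγ.1 _ _ hym hy (hxm.sub hym) (hx.sub hy)
    _ = γ y := by rw [hγ.eq_of_tendsto (hx.sub hy) (hxm.sub hym) h, add_zero]

theorem comp_mopE (hγ : IsGenLim γ) : IsGenLim fun x => γ (MopE x) := by
  refine ⟨fun x y hxm hx hym hy => ?_, fun c x hxm hx => ?_, fun x hxm hx => ?_⟩
  · simpa only [mopE_add hx hxm hy hym] using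
      hγ.1 _ _ (hx.measurable_mopE hxm) hx.mopE (hy.measurable_mopE hym) hy.mopE
  · simpa only [mopE_smul] using hγ.2.1 c _ (hx.measurable_mopE hxm) hx.mopE
  · obtain ⟨hlower, hupper⟩ := hγ.2.2 _ (hx.measurable_mopE hxm) hx.mopE
    exact ⟨(hx.liminf_le_liminf_mopE hxm).trans hlower,
      hupper.trans (hx.limsup_mopE_le_limsup hxm)⟩

theorem dilInv_comp_mopE (hγ : IsGenLim γ) : DilInv fun x => γ (MopE x) := by
  intro s hs x hxm hx
  have hσx : BddPos fun t => x (t / s) := hx.comp_div hs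
  have hσxm : Measurable fun t => x (t / s) := hxm.comp (measurable_id.div_const s)
  exact hγ.eq_of_tendsto_sub hσx.mopE (hσx.measurable_mopE hσxm) hx.mopE (hx.measurable_mopE hxm)
    (hx.tendsto_mopE_comp_div_sub_mopE hxm hs)

end IsGenLim

/-- Connes' construction: if `γ` is a generalized limit on the bounded measurable
functions on `(0,∞)`, then `ω := γ ∘ M` is a dilation invariant generalized limit. -/
theorem genLim_comp_cesaro_is_dilation_invariant_genLim
    (γ : (ℝ → ℝ) → ℝ) (hγ : IsGenLim γ) :
    IsGenLim (fun x => γ (MopE x)) ∧ DilInv (fun x => γ (MopE x)) :=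
  ⟨hγ.comp_mopE, hγ.dilInv_comp_mopE⟩
end

section
/- Define ψ(t) = 2^{√(log₂(1+t))} − 1 and g0 = sup_{k≥0} 2^{k−k²} χ_{[0,2^{k²})}, i.e. g0(t) = sup { 2^{k−k²} : k ≥ 0, t < 2^{k²} } (and g0(t) = 0 if no such k exists). Then g0 is nonnegative, nonincreasing, and sup_{t>0} (1/ψ(t)) ∫_0^t g0(s) ds < ∞; that is, g0 belongs to the Marcinkiewicz function space M_ψ. -/
open MeasureTheory Filter Set

/-- `ψ(t) = 2^√(log₂(1+t)) - 1`. -/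
noncomputable def psi0 : ℝ → ℝ := fun t => (2:ℝ) ^ Real.sqrt (Real.logb 2 (1 + t)) - 1

/-- `g0 = sup_{k ≥ 0} 2^(k - k²) χ_[0, 2^(k²))`, i.e.
`g0(t) = sup {2^(k - k²) : k ≥ 0, t < 2^(k²)}` (and `0` if no such `k` exists). -/
noncomputable def g0 : ℝ → ℝ := fun t =>
  ⨆ k : ℕ, if t < (2:ℝ) ^ (k ^ 2) then (2:ℝ) ^ ((k : ℤ) - (k : ℤ) ^ 2) else 0

/-!
For every `n`, the supremum defining `g0` is at most the sum of its first `n` terms plus the largest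
remaining height `2^(n - n²)`. The `k`-th term has mass `2^(k - k²) * 2^(k²) = 2^k`, so
`∫₀ᵗ g0 ≤ (2^n - 1) + t * 2^(n - n²)` for all `n`. Write `1 + t = 2^(s²)`, so that `ψ(t) = 2^s - 1`.
If `s ≥ 1`, then `n = ⌈s⌉` makes the right-hand side at most `3 * 2^s - 1 ≤ 5 * ψ(t)`;
if `s ≤ 1`, then `n = 0` gives `∫₀ᵗ g0 ≤ t ≤ ψ(t)`.
-/

lemma antitone_ite_lt {α β : Type*} [Preorder α] [DecidableLT α] [Zero β] [Preorder β] (a : α)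
    {c : β} (hc : 0 ≤ c) : Antitone fun t => if t < a then c else 0 := by
  intro s t hst
  by_cases ht : t < a
  · simp only [ht, hst.trans_lt ht, if_true, le_refl]
  · simp only [ht, if_false]
    split_ifs <;> simp only [hc, le_refl]

lemma integral_ite_lt_le {a c t : ℝ} (ha : 0 ≤ a) (hc : 0 ≤ c) (ht : 0 ≤ t) :
    ∫ s in (0:ℝ)..t, (if s < a then c else 0) ≤ a * c := by
  have Iio_inter_subset : Iio a ∩ Ioc 0 t ⊆ Ioc 0 a := fun _ hs => ⟨hs.2.1, hs.1.le⟩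
  calc ∫ s in (0:ℝ)..t, (if s < a then c else 0)
    _ = ∫ s in Ioc 0 t, (Iio a).indicator (fun _ => c) s := by
        simp only [intervalIntegral.integral_of_le ht, indicator_apply, mem_Iio]
    _ = volume.real (Iio a ∩ Ioc 0 t) * c := by
        rw [integral_indicator_const c measurableSet_Iio,
          measureReal_restrict_apply measurableSet_Iio, smul_eq_mul]
    _ ≤ volume.real (Ioc 0 a) * c := by
        gcongr
        exact measure_Ioc_lt_top.ne
    _ = a * c := by rw [Real.volume_real_Ioc_of_le ha, sub_zero]

section StepEnvelope

variable {ι : Type*}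

/-- The supremum `sup_k c_k χ_(-∞, a_k)` of a family of step functions, of which `g0`
is an instance; it takes the junk value `0` where the supremum is infinite. -/
noncomputable def stepEnvelope (a c : ι → ℝ) (t : ℝ) : ℝ :=
  ⨆ k, if t < a k then c k else 0

lemma stepEnvelope_nonneg (a : ι → ℝ) {c : ι → ℝ} (hc : ∀ k, 0 ≤ c k) (t : ℝ) :
    0 ≤ stepEnvelope a c t :=
  Real.iSup_nonneg fun k => ite_nonneg (hc k) le_rfl

lemma antitone_stepEnvelope (a : ι → ℝ) {c : ι → ℝ} (hc : ∀ k, 0 ≤ c k)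
    (hbdd : BddAbove (range c)) : Antitone (stepEnvelope a c) := fun s t hst => by
  refine ciSup_mono (hbdd.range_mono _ fun k => ?_) fun k => antitone_ite_lt (a k) (hc k) hst
  split_ifs <;> simp only [hc, le_refl]

lemma stepEnvelope_le_sum_add {a c : ℕ → ℝ} (hc : ∀ k, 0 ≤ c k) (hanti : Antitone c) (n : ℕ)
    (t : ℝ) :
    stepEnvelope a c t ≤ (∑ k ∈ Finset.range n, if t < a k then c k else 0) + c n := by
  have term_nonneg (k : ℕ) : 0 ≤ if t < a k then c k else 0 := ite_nonneg (hc k) le_rfl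
  have sum_nonneg : 0 ≤ ∑ k ∈ Finset.range n, if t < a k then c k else 0 :=
    Finset.sum_nonneg fun k _ => term_nonneg k
  refine Real.iSup_le (fun k => ?_) (add_nonneg sum_nonneg (hc n))
  rcases lt_or_ge k n with hkn | hnk
  · exact le_add_of_le_of_nonneg
      (Finset.single_le_sum (f := fun k => if t < a k then c k else 0)
        (fun i _ => term_nonneg i) (Finset.mem_range.2 hkn)) (hc n)
  · refine le_add_of_nonneg_of_le sum_nonneg ?_
    split_ifs
    exacts [hanti hnk, hc n]

lemma integral_stepEnvelope_le {a c : ℕ → ℝ} (ha : ∀ k, 0 ≤ a k) (hc : ∀ k, 0 ≤ c k)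
    (hanti : Antitone c) (n : ℕ) {t : ℝ} (ht : 0 ≤ t) :
    ∫ s in (0:ℝ)..t, stepEnvelope a c s ≤ (∑ k ∈ Finset.range n, a k * c k) + t * c n := by
  have bddAbove_range : BddAbove (range c) :=
    ⟨c 0, forall_mem_range.2 fun k => hanti k.zero_le⟩
  have integrable_term (k : ℕ) :
      IntervalIntegrable (fun s => if s < a k then c k else 0) volume 0 t :=
    (antitone_ite_lt (a k) (hc k)).intervalIntegrable
  have integrable_sum : IntervalIntegrable
      (fun s => ∑ k ∈ Finset.range n, if s < a k then c k else 0) volume 0 t := by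
    simpa only [Finset.sum_fn] using IntervalIntegrable.sum _ fun k _ => integrable_term k
  calc ∫ s in (0:ℝ)..t, stepEnvelope a c s
    _ ≤ ∫ s in (0:ℝ)..t, ((∑ k ∈ Finset.range n, if s < a k then c k else 0) + c n) :=
        intervalIntegral.integral_mono ht
          (antitone_stepEnvelope a hc bddAbove_range).intervalIntegrable
          (integrable_sum.add intervalIntegrable_const)
          (stepEnvelope_le_sum_add hc hanti n)
    _ = (∑ k ∈ Finset.range n, ∫ s in (0:ℝ)..t, if s < a k then c k else 0) + t * c n := by
        rw [intervalIntegral.integral_add integrable_sum intervalIntegrable_const,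
          intervalIntegral.integral_finsetSum fun k _ => integrable_term k,
          intervalIntegral.integral_const, sub_zero, smul_eq_mul]
    _ ≤ (∑ k ∈ Finset.range n, a k * c k) + t * c n := by
        gcongr with k
        exact integral_ite_lt_le (ha k) (hc k) ht

end StepEnvelope

lemma g0_eq_stepEnvelope :
    g0 = stepEnvelope (fun k : ℕ => 2 ^ k ^ 2) (fun k : ℕ => 2 ^ ((k : ℤ) - (k : ℤ) ^ 2)) :=
  rfl

lemma antitone_two_zpow_sub_sq : Antitone fun k : ℕ => (2:ℝ) ^ ((k : ℤ) - (k : ℤ) ^ 2) := by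
  refine antitone_nat_of_succ_le fun k => zpow_le_zpow_right₀ one_le_two ?_
  push_cast
  linarith

lemma g0_nonneg (t : ℝ) : 0 ≤ g0 t :=
  stepEnvelope_nonneg _ (fun _ => by positivity) t

lemma antitone_g0 : Antitone g0 :=
  antitone_stepEnvelope _ (fun _ => by positivity)
    ⟨_, forall_mem_range.2 fun k => antitone_two_zpow_sub_sq k.zero_le⟩

lemma integral_g0_le (n : ℕ) {t : ℝ} (ht : 0 ≤ t) :
    ∫ s in (0:ℝ)..t, g0 s ≤ 2 ^ n - 1 + t * 2 ^ ((n : ℤ) - (n : ℤ) ^ 2) := by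
  have mass (k : ℕ) : (2:ℝ) ^ k ^ 2 * 2 ^ ((k : ℤ) - (k : ℤ) ^ 2) = 2 ^ k := by
    rw [← zpow_natCast, ← zpow_natCast, ← zpow_add₀ two_ne_zero]
    push_cast
    rw [add_sub_cancel]
  have sum_mass :
      ∑ k ∈ Finset.range n, (2:ℝ) ^ k ^ 2 * 2 ^ ((k : ℤ) - (k : ℤ) ^ 2) = 2 ^ n - 1 := by
    rw [Finset.sum_congr rfl fun k _ => mass k, geom_sum_eq (by norm_num)]
    norm_num
  rw [g0_eq_stepEnvelope, ← sum_mass]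
  exact integral_stepEnvelope_le (fun _ => by positivity) (fun _ => by positivity)
    antitone_two_zpow_sub_sq n ht

lemma rpow_sqrt_logb_sq {b x : ℝ} (hb : 1 < b) (hx : 1 ≤ x) : b ^ (√(Real.logb b x) ^ 2) = x := by
  rw [Real.sq_sqrt (Real.logb_nonneg hb hx), Real.rpow_logb (by linarith) hb.ne' (by linarith)]

lemma psi0_pos {t : ℝ} (ht : 0 < t) : 0 < psi0 t :=
  sub_pos.2 <| Real.one_lt_rpow one_lt_two <| Real.sqrt_pos.2 <|
    Real.logb_pos one_lt_two (by linarith)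

lemma le_psi0_of_le_one {t : ℝ} (ht : 0 ≤ t) (ht1 : t ≤ 1) : t ≤ psi0 t := by
  set s := √(Real.logb 2 (1 + t)) with hs
  have two_rpow_sq : (2:ℝ) ^ (s ^ 2) = 1 + t := rpow_sqrt_logb_sq one_lt_two (by linarith)
  have s_le_one : s ≤ 1 := by
    rw [hs, Real.sqrt_le_one, Real.logb_le_iff_le_rpow one_lt_two (by linarith), Real.rpow_one]
    linarith
  have two_rpow_sq_le : (2:ℝ) ^ (s ^ 2) ≤ 2 ^ s :=
    Real.rpow_le_rpow_of_exponent_le one_le_two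
      (pow_le_of_le_one (Real.sqrt_nonneg _) s_le_one two_ne_zero)
  change t ≤ 2 ^ s - 1
  linarith

lemma rpow_sq_mul_zpow_sub_sq_le {b s : ℝ} {n : ℕ} (hb : 1 ≤ b) (hsn : s ≤ n) (h1 : 1 ≤ s + n) :
    b ^ (s ^ 2) * b ^ ((n : ℤ) - (n : ℤ) ^ 2) ≤ b ^ s := by
  have exponent_le : s ^ 2 + (n - n ^ 2) ≤ s := by
    linarith [mul_nonneg (sub_nonneg.2 hsn) (sub_nonneg.2 h1)]
  rw [← Real.rpow_intCast, ← Real.rpow_add (by linarith)]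
  push_cast
  exact Real.rpow_le_rpow_of_exponent_le hb exponent_le

lemma integral_g0_le_five_mul_psi0_of_one_le {t : ℝ} (ht : 1 ≤ t) :
    ∫ s in (0:ℝ)..t, g0 s ≤ 5 * psi0 t := by
  set s := √(Real.logb 2 (1 + t)) with hs
  have two_rpow_sq : (2:ℝ) ^ (s ^ 2) = 1 + t := rpow_sqrt_logb_sq one_lt_two (by linarith)
  have one_le_s : 1 ≤ s := by
    rw [hs, Real.one_le_sqrt, Real.le_logb_iff_rpow_le one_lt_two (by linarith), Real.rpow_one]
    linarith
  have two_le_rpow : (2:ℝ) ≤ 2 ^ s := Real.self_le_rpow_of_one_le one_le_two one_le_s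
  have two_pow_ceil_le : (2:ℝ) ^ ⌈s⌉₊ ≤ 2 * 2 ^ s := by
    rw [← Real.rpow_natCast, ← Real.rpow_one_add' (by positivity) (by positivity)]
    exact Real.rpow_le_rpow_of_exponent_le one_le_two
      (by linarith [Nat.ceil_lt_add_one (zero_le_one.trans one_le_s)])
  calc ∫ s in (0:ℝ)..t, g0 s
    _ ≤ 2 ^ ⌈s⌉₊ - 1 + t * 2 ^ ((⌈s⌉₊ : ℤ) - (⌈s⌉₊ : ℤ) ^ 2) := integral_g0_le _ (by linarith)
    _ ≤ 2 ^ ⌈s⌉₊ - 1 + 2 ^ (s ^ 2) * 2 ^ ((⌈s⌉₊ : ℤ) - (⌈s⌉₊ : ℤ) ^ 2) := by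
        gcongr
        linarith
    _ ≤ 2 * 2 ^ s - 1 + 2 ^ s := by
        gcongr
        exact rpow_sq_mul_zpow_sub_sq_le one_le_two (Nat.le_ceil s) (by linarith [Nat.le_ceil s])
    _ ≤ 5 * (2 ^ s - 1) := by linarith

lemma integral_g0_le_five_mul_psi0 {t : ℝ} (ht : 0 < t) :
    ∫ s in (0:ℝ)..t, g0 s ≤ 5 * psi0 t := by
  rcases le_total t 1 with ht1 | ht1
  · calc ∫ s in (0:ℝ)..t, g0 s
      _ ≤ t := by simpa using integral_g0_le 0 ht.le
      _ ≤ psi0 t := le_psi0_of_le_one ht.le ht1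
      _ ≤ 5 * psi0 t := by linarith [psi0_pos ht]
  · exact integral_g0_le_five_mul_psi0_of_one_le ht1

/-- `g0` is nonnegative, nonincreasing on `(0,∞)`, and belongs to the Marcinkiewicz
function space `M_ψ`: `sup_{t>0} (1/ψ(t)) ∫_0^t g0(s) ds < ∞`. -/
theorem g0_mem_Mpsi :
    (∀ t : ℝ, 0 ≤ g0 t) ∧ AntitoneOn g0 (Set.Ioi 0) ∧
    ∃ C : ℝ, ∀ t > (0:ℝ), (∫ s in (0:ℝ)..t, g0 s) / psi0 t ≤ C :=
  ⟨g0_nonneg, antitone_g0.antitoneOn _, 5, fun _ ht =>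
    (div_le_iff₀ (psi0_pos ht)).2 (integral_g0_le_five_mul_psi0 ht)⟩
end
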